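/- arXiv:1910.07304 — 5 statements merged into one kernel-verified Lean document; each statement's English description precedes it below -/
import Mathlib

section
/- Let ω : ℝ → ℝ³ be continuous and let Q : ℝ → M₃(ℝ) be differentiable with Q(0) = I₃, Q'(t) = Q(t)·A(ω(t)) and Q(t)ᵀQ(t) = I₃ for every t. Then for every t ≥ 0, ‖Q(t) − I₃‖_F ≤ √6 · t · sup_{s ∈ [0,t]} |ω(s)|, where ‖·‖_F is the Frobenius norm on 3×3 matrices and |·| the Euclidean norm on ℝ³. -/
/-!
Since `Q t` is orthogonal, left multiplication by it preserves the Frobenius norm, so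
`‖Q' t‖ = ‖A(ω t)‖ = √2 · |ω t|`, and the mean value inequality yields the bound with `√2` in
place of `√6`. The constant `√6 = ‖I₃‖ · √2` is what submultiplicativity of the Frobenius norm alone
would give.
-/

open Matrix

noncomputable section

attribute [local instance] Matrix.normedAddCommGroup Matrix.normedSpace

/-- The skew-symmetric matrix `A(ω)` satisfying `A(ω) v = ω × v`. -/
def Amat (w : EuclideanSpace ℝ (Fin 3)) : Matrix (Fin 3) (Fin 3) ℝ :=
  !![0, -w 2, w 1; w 2, 0, -w 0; -w 1, w 0, 0]

/-- The Frobenius norm of a `3 × 3` real matrix. -/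
def frobNorm (M : Matrix (Fin 3) (Fin 3) ℝ) : ℝ :=
  Real.sqrt (∑ i, ∑ j, (M i j) ^ 2)

section Frobenius

open scoped Matrix.Norms.Frobenius

variable {𝕜 m n p : Type*} [RCLike 𝕜] [Fintype m] [Fintype n] [Fintype p]

lemma frobenius_norm_eq_sqrt_sum (M : Matrix m n 𝕜) : ‖M‖ = √(∑ i, ∑ j, ‖M i j‖ ^ 2) := by
  simp only [frobenius_norm_def, Real.sqrt_eq_rpow, Real.rpow_two]

lemma frobenius_norm_eq_sqrt_re_trace (M : Matrix m n 𝕜) :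
    ‖M‖ = √(RCLike.re (Mᴴ * M).trace) := by
  rw [frobenius_norm_eq_sqrt_sum, Finset.sum_comm]
  simp only [trace, diag_apply, mul_apply, conjTranspose_apply, RCLike.star_def, RCLike.conj_mul,
    map_sum, ← RCLike.ofReal_pow, RCLike.ofReal_re]

lemma frobenius_norm_mul_of_conjTranspose_mul_self_eq_one [DecidableEq n] {U : Matrix m n 𝕜}
    (hU : Uᴴ * U = 1) (M : Matrix n p 𝕜) : ‖U * M‖ = ‖M‖ := by
  have h_gram : (U * M)ᴴ * (U * M) = Mᴴ * M := by
    rw [conjTranspose_mul, Matrix.mul_assoc, ← Matrix.mul_assoc Uᴴ, hU, Matrix.one_mul]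
  rw [frobenius_norm_eq_sqrt_re_trace, h_gram, ← frobenius_norm_eq_sqrt_re_trace]

lemma frobenius_norm_sub_le_of_hasDerivWithinAt_mul [DecidableEq n] {Q : ℝ → Matrix m n 𝕜}
    {A : ℝ → Matrix n n 𝕜} {a b C : ℝ} (hab : a ≤ b)
    (hQ' : ∀ s ∈ Set.Icc a b, HasDerivWithinAt Q (Q s * A s) (Set.Icc a b) s)
    (horth : ∀ s ∈ Set.Ico a b, (Q s)ᴴ * Q s = 1) (hA : ∀ s ∈ Set.Ico a b, ‖A s‖ ≤ C) :
    ‖Q b - Q a‖ ≤ C * (b - a) := by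
  have hspeed : ∀ s ∈ Set.Ico a b, ‖Q s * A s‖ ≤ C := fun s hs =>
    (frobenius_norm_mul_of_conjTranspose_mul_self_eq_one (horth s hs) (A s)).trans_le (hA s hs)
  exact norm_image_sub_le_of_norm_deriv_le_segment' hQ' hspeed b (Set.right_mem_Icc.2 hab)

lemma frobNorm_eq_norm (M : Matrix (Fin 3) (Fin 3) ℝ) : frobNorm M = ‖M‖ := by
  simp only [frobNorm, frobenius_norm_eq_sqrt_sum, Real.norm_eq_abs, sq_abs]

end Frobenius

lemma frobNorm_Amat (w : EuclideanSpace ℝ (Fin 3)) : frobNorm (Amat w) = √2 * ‖w‖ := by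
  have hsum : ∑ i, ∑ j, Amat w i j ^ 2 = 2 * ‖w‖ ^ 2 := by
    simp only [EuclideanSpace.real_norm_sq_eq, Fin.sum_univ_three, Amat, of_apply, cons_val',
      cons_val_fin_one, cons_val_zero, cons_val_one, cons_val]
    ring
  rw [frobNorm, hsum, Real.sqrt_mul zero_le_two, Real.sqrt_sq (norm_nonneg w)]

theorem stmt2_general {ω : ℝ → EuclideanSpace ℝ (Fin 3)} {Q : ℝ → Matrix (Fin 3) (Fin 3) ℝ}
    {a b : ℝ} (hab : a ≤ b) (hω : BddAbove ((fun s => ‖ω s‖) '' Set.Icc a b))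
    (hQ' : ∀ s ∈ Set.Icc a b, HasDerivWithinAt Q (Q s * Amat (ω s)) (Set.Icc a b) s)
    (horth : ∀ s ∈ Set.Ico a b, (Q s)ᵀ * Q s = 1) :
    frobNorm (Q b - Q a) ≤ √2 * (b - a) * sSup ((fun s => ‖ω s‖) '' Set.Icc a b) := by
  set S := sSup ((fun s => ‖ω s‖) '' Set.Icc a b)
  have hA : ∀ s ∈ Set.Ico a b, frobNorm (Amat (ω s)) ≤ √2 * S := fun s hs => by
    rw [frobNorm_Amat]
    gcongr
    exact le_csSup hω (Set.mem_image_of_mem _ (Set.Ico_subset_Icc_self hs))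
  simp only [← conjTranspose_eq_transpose_of_trivial] at horth
  simp only [frobNorm_eq_norm] at hA ⊢
  -- `hQ'` applies as is: the Frobenius norm induces the entrywise topology definitionally.
  calc _ ≤ √2 * S * (b - a) := frobenius_norm_sub_le_of_hasDerivWithinAt_mul hab hQ' horth hA
    _ = √2 * (b - a) * S := by ring

/-- If `Q 0 = I₃`, `Q' t = Q t * A (ω t)` and `Q tᵀ Q t = I₃` for all `t`, then for every
`t ≥ 0`, `‖Q t − I₃‖_F ≤ √6 · t · sup_{s ∈ [0,t]} |ω s|`. -/
theorem stmt2 (ω : ℝ → EuclideanSpace ℝ (Fin 3)) (hω : Continuous ω)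
    (Q : ℝ → Matrix (Fin 3) (Fin 3) ℝ) (hQ0 : Q 0 = 1)
    (hQ' : ∀ t : ℝ, HasDerivAt Q (Q t * Amat (ω t)) t)
    (horth : ∀ t : ℝ, (Q t)ᵀ * Q t = 1) :
    ∀ t : ℝ, 0 ≤ t →
      frobNorm (Q t - 1) ≤ Real.sqrt 6 * t * sSup ((fun s => ‖ω s‖) '' Set.Icc 0 t) := by
  intro t ht
  have hS : 0 ≤ sSup ((fun s => ‖ω s‖) '' Set.Icc 0 t) :=
    Real.sSup_nonneg (Set.forall_mem_image.2 fun s _ => norm_nonneg (ω s))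
  have h := stmt2_general ht (isCompact_Icc.image hω.norm).bddAbove
    (fun s _ => (hQ' s).hasDerivWithinAt) (fun s _ => horth s)
  rw [hQ0, sub_zero] at h
  exact h.trans (by gcongr; norm_num)
end
end

section
/- Let k_d > 0, T_I > 0, and let k_p : [0,∞) → ℝ be continuously differentiable with 0 ≤ k_p'(s) ≤ k_d/(2T_I²) for all s and k_p'(s) = 0 for all s ≥ T_I. Let h₀, h₁ ∈ ℝ³, let ℓ : [0,∞) → ℝ³ be continuous and set h(t) = h₀ + ∫₀ᵗ ℓ(s) ds. Then for every T > 0: ∫₀ᵀ (k_p'(s)/2)|h₁ − h(s)|² ds ≤ (k_d/(2T_I))·|h₁ − h₀|² + (k_d/2)∫₀ᵀ |ℓ(s)|² ds. -/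
open MeasureTheory

noncomputable section

/-!
The weight `kp'` is at most `kd / (2 * TI ^ 2)` and vanishes after time `TI`, so only the times
`s ≤ TI` contribute. There the displacement `∫₀ˢ ℓ` is controlled by Cauchy–Schwarz,
`‖∫₀ˢ ℓ‖² ≤ TI ∫₀ᵀ ‖ℓ‖²`, and `‖x + y‖² ≤ 2 (‖x‖² + ‖y‖²)` bounds the integrand by a constant.
Integrating that constant over a time of length at most `TI` gives the estimate.
-/

section CauchySchwarz

variable {E : Type*} [NormedAddCommGroup E] [NormedSpace ℝ E]

theorem sq_norm_integral_le_measureReal_mul_integral_sq_norm {α : Type*} [MeasurableSpace α]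
    {μ : Measure α} [IsFiniteMeasure μ] {f : α → E} (hf : MemLp f 2 μ) :
    ‖∫ x, f x ∂μ‖ ^ 2 ≤ μ.real Set.univ * ∫ x, ‖f x‖ ^ 2 ∂μ := by
  rcases eq_zero_or_neZero μ with rfl | _
  · simp
  have hmass : 0 < μ.real Set.univ := measureReal_univ_pos
  have jensen : (⨍ x, ‖f x‖ ∂μ) ^ 2 ≤ ⨍ x, ‖f x‖ ^ 2 ∂μ :=
    (even_two.convexOn_pow (𝕜 := ℝ)).map_average_le (continuousOn_pow 2) isClosed_univ
      (by simp) (hf.integrable one_le_two).norm (hf.integrable_norm_pow two_ne_zero)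
  rw [average_eq, average_eq, smul_eq_mul, smul_eq_mul] at jensen
  calc ‖∫ x, f x ∂μ‖ ^ 2
      ≤ (∫ x, ‖f x‖ ∂μ) ^ 2 := by gcongr; exact norm_integral_le_integral_norm f
    _ = μ.real Set.univ ^ 2 * ((μ.real Set.univ)⁻¹ * ∫ x, ‖f x‖ ∂μ) ^ 2 := by field_simp
    _ ≤ μ.real Set.univ ^ 2 * ((μ.real Set.univ)⁻¹ * ∫ x, ‖f x‖ ^ 2 ∂μ) := by gcongr
    _ = μ.real Set.univ * ∫ x, ‖f x‖ ^ 2 ∂μ := by field_simp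

theorem sq_norm_intervalIntegral_le {f : ℝ → E} {a b : ℝ} (hab : a ≤ b)
    (hf : MemLp f 2 (volume.restrict (Set.Ioc a b))) :
    ‖∫ x in a..b, f x‖ ^ 2 ≤ (b - a) * ∫ x in a..b, ‖f x‖ ^ 2 := by
  simpa only [intervalIntegral.integral_of_le hab, measureReal_restrict_apply_univ,
    Real.volume_real_Ioc_of_le hab] using
    sq_norm_integral_le_measureReal_mul_integral_sq_norm hf

theorem sq_norm_sub_add_intervalIntegral_le {f : ℝ → E} {a s b c : ℝ}
    (has : a ≤ s) (hsb : s ≤ b) (hsc : s ≤ c)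
    (hf : MemLp f 2 (volume.restrict (Set.Ioc a b))) (x y : E) :
    ‖x - (y + ∫ t in a..s, f t)‖ ^ 2 ≤
      2 * (‖x - y‖ ^ 2 + (c - a) * ∫ t in a..b, ‖f t‖ ^ 2) := by
  have hf_sq : IntervalIntegrable (fun t ↦ ‖f t‖ ^ 2) volume a b :=
    (intervalIntegrable_iff_integrableOn_Ioc_of_le (has.trans hsb)).2
      (hf.integrable_norm_pow two_ne_zero)
  have energy_nonneg : 0 ≤ ∫ t in a..b, ‖f t‖ ^ 2 :=
    intervalIntegral.integral_nonneg (has.trans hsb) fun t _ ↦ sq_nonneg _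
  have energy_mono : ∫ t in a..s, ‖f t‖ ^ 2 ≤ ∫ t in a..b, ‖f t‖ ^ 2 :=
    intervalIntegral.integral_mono_interval le_rfl has hsb
      (Filter.Eventually.of_forall fun t ↦ sq_nonneg _) hf_sq
  have displacement : ‖∫ t in a..s, f t‖ ^ 2 ≤ (c - a) * ∫ t in a..b, ‖f t‖ ^ 2 :=
    calc ‖∫ t in a..s, f t‖ ^ 2
        ≤ (s - a) * ∫ t in a..s, ‖f t‖ ^ 2 := sq_norm_intervalIntegral_le has
          (hf.mono_measure (Measure.restrict_mono (Set.Ioc_subset_Ioc_right hsb) le_rfl))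
      _ ≤ (s - a) * ∫ t in a..b, ‖f t‖ ^ 2 :=
          mul_le_mul_of_nonneg_left energy_mono (sub_nonneg.2 has)
      _ ≤ (c - a) * ∫ t in a..b, ‖f t‖ ^ 2 := by gcongr
  calc ‖x - (y + ∫ t in a..s, f t)‖ ^ 2
      ≤ (‖x - y‖ + ‖∫ t in a..s, f t‖) ^ 2 := by
        rw [← sub_sub]; gcongr; exact norm_sub_le _ _
    _ ≤ 2 * (‖x - y‖ ^ 2 + ‖∫ t in a..s, f t‖ ^ 2) := add_sq_le
    _ ≤ 2 * (‖x - y‖ ^ 2 + (c - a) * ∫ t in a..b, ‖f t‖ ^ 2) := by gcongr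

end CauchySchwarz

theorem intervalIntegral_le_mul_of_le_const_of_eq_zero {f : ℝ → ℝ} {a b c C : ℝ}
    (hab : a ≤ b) (hac : a ≤ c) (hC : 0 ≤ C) (hf : IntervalIntegrable f volume a b)
    (hle : ∀ s ∈ Set.Icc a (min b c), f s ≤ C) (hzero : ∀ s ∈ Set.Ioc c b, f s = 0) :
    ∫ s in a..b, f s ≤ (c - a) * C := by
  have ham : a ≤ min b c := le_min hab hac
  have hf_head : IntervalIntegrable f volume a (min b c) :=
    hf.mono_set (Set.uIcc_subset_uIcc_left (Set.mem_uIcc_of_le ham (min_le_left b c)))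
  have truncate : ∫ s in a..b, f s = ∫ s in a..min b c, f s := by
    rw [intervalIntegral.integral_of_le hab, intervalIntegral.integral_of_le ham]
    refine setIntegral_eq_of_subset_of_forall_sdiff_eq_zero measurableSet_Ioc
      (Set.Ioc_subset_Ioc_right (min_le_left b c)) fun s hs ↦ hzero s ⟨?_, hs.1.2⟩
    by_contra! hsc
    exact hs.2 ⟨hs.1.1, le_min hs.1.2 hsc⟩
  calc ∫ s in a..b, f s
      = ∫ s in a..min b c, f s := truncate
    _ ≤ ∫ _ in a..min b c, C :=
        intervalIntegral.integral_mono_on ham hf_head intervalIntegrable_const hle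
    _ = (min b c - a) * C := by rw [intervalIntegral.integral_const, smul_eq_mul]
    _ ≤ (c - a) * C := by gcongr; exact min_le_right b c

theorem stmt5_general {E : Type*} [NormedAddCommGroup E] [NormedSpace ℝ E] [CompleteSpace E]
    {kd TI T : ℝ} (hTI : 0 < TI) (hT : 0 ≤ T)
    {kp kp' : ℝ → ℝ} (hkp : ∀ s : ℝ, HasDerivAt kp (kp' s) s)
    (hkp'int : IntervalIntegrable kp' volume 0 T)
    (hkp'le : ∀ s : ℝ, 0 ≤ s → kp' s ≤ kd / (2 * TI ^ 2))
    (hkp'zero : ∀ s : ℝ, TI ≤ s → kp' s = 0)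
    (h₀ h₁ : E) {ℓ : ℝ → E} (hℓ : MemLp ℓ 2 (volume.restrict (Set.Ioc 0 T)))
    {h : ℝ → E} (hh : ∀ t ∈ Set.Icc 0 T, h t = h₀ + ∫ s in (0:ℝ)..t, ℓ s) :
    (∫ s in (0:ℝ)..T, (kp' s / 2) * ‖h₁ - h s‖ ^ 2)
      ≤ (kd / (2 * TI)) * ‖h₁ - h₀‖ ^ 2 + (kd / 2) * ∫ s in (0:ℝ)..T, ‖ℓ s‖ ^ 2 := by
  have rate_nonneg : 0 ≤ kd / (2 * TI ^ 2) := hkp'zero TI le_rfl ▸ hkp'le TI hTI.le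
  have energy_nonneg : 0 ≤ ∫ s in (0:ℝ)..T, ‖ℓ s‖ ^ 2 :=
    intervalIntegral.integral_nonneg hT fun s _ ↦ sq_nonneg _
  have hℓ_int : IntervalIntegrable ℓ volume 0 T :=
    (intervalIntegrable_iff_integrableOn_Ioc_of_le hT).2 (hℓ.integrable one_le_two)
  have h_cont : ContinuousOn h (Set.uIcc 0 T) :=
    (continuousOn_const.add (intervalIntegral.continuousOn_primitive_interval' hℓ_int
      Set.left_mem_uIcc)).congr fun t ht ↦ hh t (Set.uIcc_of_le hT ▸ ht)
  have integrand_le : ∀ s ∈ Set.Icc 0 (min T TI), (kp' s / 2) * ‖h₁ - h s‖ ^ 2 ≤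
      kd / (2 * TI ^ 2) / 2 *
        (2 * (‖h₁ - h₀‖ ^ 2 + (TI - 0) * ∫ s in (0:ℝ)..T, ‖ℓ s‖ ^ 2)) := by
    rintro s ⟨hs, hs_min⟩
    obtain ⟨hsT, hsTI⟩ := le_min_iff.1 hs_min
    rw [hh s ⟨hs, hsT⟩]
    gcongr
    · exact hkp'le s hs
    · exact sq_norm_sub_add_intervalIntegral_le hs hsT hsTI hℓ h₁ h₀
  have integrand_int :
      IntervalIntegrable (fun s ↦ (kp' s / 2) * ‖h₁ - h s‖ ^ 2) volume 0 T :=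
    (hkp'int.div_const 2).mul_continuousOn ((continuousOn_const.sub h_cont).norm.pow 2)
  refine (intervalIntegral_le_mul_of_le_const_of_eq_zero hT hTI.le ?_ integrand_int
    integrand_le fun s hs ↦ by simp [hkp'zero s hs.1.le]).trans_eq ?_
  · rw [sub_zero]; positivity
  · field_simp; ring

/-- Spring-term estimate: under the hypotheses (hypkp) on the time-dependent stiffness `k_p`,
with `h t = h₀ + ∫₀ᵗ ℓ`, for every `T > 0`,
`∫₀ᵀ (k_p'/2)|h₁ − h|² ≤ (k_d/(2T_I))|h₁ − h₀|² + (k_d/2)∫₀ᵀ |ℓ|²`. -/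
theorem stmt5 (kd TI : ℝ) (hkd : 0 < kd) (hTI : 0 < TI)
    (kp kp' : ℝ → ℝ) (hkp : ∀ s : ℝ, HasDerivAt kp (kp' s) s) (hkp'c : Continuous kp')
    (hkp'nonneg : ∀ s : ℝ, 0 ≤ s → 0 ≤ kp' s)
    (hkp'le : ∀ s : ℝ, 0 ≤ s → kp' s ≤ kd / (2 * TI ^ 2))
    (hkp'zero : ∀ s : ℝ, TI ≤ s → kp' s = 0)
    (h₀ h₁ : EuclideanSpace ℝ (Fin 3))
    (ℓ : ℝ → EuclideanSpace ℝ (Fin 3)) (hℓ : Continuous ℓ)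
    (h : ℝ → EuclideanSpace ℝ (Fin 3))
    (hh : ∀ t : ℝ, h t = h₀ + ∫ s in (0:ℝ)..t, ℓ s) :
    ∀ T : ℝ, 0 < T →
      (∫ s in (0:ℝ)..T, (kp' s / 2) * ‖h₁ - h s‖ ^ 2)
        ≤ (kd / (2 * TI)) * ‖h₁ - h₀‖ ^ 2 + (kd / 2) * ∫ s in (0:ℝ)..T, ‖ℓ s‖ ^ 2 := by
  intro T hT
  exact stmt5_general hTI hT.le hkp (hkp'c.intervalIntegrable 0 T) hkp'le hkp'zero h₀ h₁
    ((memLp_two_iff_integrable_sq_norm hℓ.aestronglyMeasurable).2 (hℓ.norm.pow 2).integrableOn_Ioc)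
    fun t _ ↦ hh t
end
end

section
/- Let k_d > 0, T_I > 0, h₀, h₁ ∈ ℝ³, and let k_p : [0,∞) → [0,1] be continuously differentiable with k_p(0) = 0, 0 ≤ k_p'(s) ≤ k_d/(2T_I²) for all s, and k_p'(s) = 0 for s ≥ T_I. Then there exists a constant C > 0, depending only on k_d and T_I, such that for every continuously differentiable ℓ : [0,∞) → ℝ³, setting h(t) = h₀ + ∫₀ᵗ ℓ(s) ds, one has for all T > 0 and all t ∈ [0,T]: ∫₀ᵗ (d/ds)[k_p(s)(h₁ − h(s))]·ℓ'(s) ds ≤ C(|h₁ − h₀|² + ∫₀ᵀ |ℓ(s)|² ds) + (k_d/2)∫₀ᵀ |ℓ'(s)|² ds. -/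
open MeasureTheory
open scoped RealInnerProductSpace

noncomputable section

/-!
Young's inequality absorbs `ℓ'` into `(k_d/2) ∫ |ℓ'|²`, at the price of
`(∫ |k_p' (h₁ - h)|² + ∫ |k_p ℓ|²) / k_d`. The second integral is at most `∫ |ℓ|²` because
`|k_p| ≤ 1`. In the first, `k_p'` lives on `[0, T_I]`, and on that bounded time interval `|h - h₀|²`
is controlled by `T_I ∫ |ℓ|²` through the Cauchy–Schwarz inequality; this is why the constant does
not depend on `T`.
-/

section NormedSpace

variable {F : Type*} [NormedAddCommGroup F] {a b : ℝ}

theorem norm_sub_sq_le_two_mul (x y : F) : ‖x - y‖ ^ 2 ≤ 2 * (‖x‖ ^ 2 + ‖y‖ ^ 2) :=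
  calc ‖x - y‖ ^ 2 ≤ (‖x‖ + ‖y‖) ^ 2 := by gcongr; exact norm_sub_le x y
    _ ≤ 2 * (‖x‖ ^ 2 + ‖y‖ ^ 2) := add_sq_le

theorem sq_integral_le_mul_integral_sq {f : ℝ → ℝ} (hab : a ≤ b)
    (hf : IntervalIntegrable f volume a b)
    (hf2 : IntervalIntegrable (fun x ↦ f x ^ 2) volume a b) :
    (∫ x in a..b, f x) ^ 2 ≤ (b - a) * ∫ x in a..b, f x ^ 2 := by
  rcases hab.eq_or_lt with rfl | hlt
  · simp
  have hpos : 0 < b - a := sub_pos.2 hlt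
  have jensen : (⨍ x in Set.Ioc a b, f x) ^ 2 ≤ ⨍ x in Set.Ioc a b, f x ^ 2 :=
    even_two.convexOn_pow.map_set_average_le (by fun_prop) isClosed_univ
      (by simpa using hlt) (by simp) (by simp) hf.1 hf2.1
  rw [← Set.uIoc_of_le hab, interval_average_eq_div, interval_average_eq_div, div_pow,
    div_le_div_iff₀ (by positivity) hpos] at jensen
  exact le_of_mul_le_mul_right (by linarith) hpos

theorem intervalIntegrable_norm_sq {f : ℝ → F} (hab : a ≤ b) (hf : ContinuousOn f (Set.Icc a b)) :
    IntervalIntegrable (fun x ↦ ‖f x‖ ^ 2) volume a b :=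
  (hf.norm.pow 2).intervalIntegrable_of_Icc hab

theorem integral_norm_sq_mono_right {f : ℝ → F} {c : ℝ} (hf : ContinuousOn f (Set.Icc a c))
    (hab : a ≤ b) (hbc : b ≤ c) : ∫ x in a..b, ‖f x‖ ^ 2 ≤ ∫ x in a..c, ‖f x‖ ^ 2 :=
  intervalIntegral.integral_mono_interval le_rfl hab hbc (.of_forall fun _ ↦ by positivity)
    (intervalIntegrable_norm_sq (hab.trans hbc) hf)

theorem integral_le_mul_of_eq_zero_of_le {f : ℝ → ℝ} {K τ : ℝ} (hf : ContinuousOn f (Set.Icc a b))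
    (hab : a ≤ b) (haτ : a ≤ τ) (hK : 0 ≤ K) (hfK : ∀ x ∈ Set.Icc a b, x ≤ τ → f x ≤ K)
    (hf0 : ∀ x ∈ Set.Icc a b, τ ≤ x → f x = 0) :
    ∫ x in a..b, f x ≤ (τ - a) * K := by
  set c := min b τ
  have hac : a ≤ c := le_min hab haτ
  have hcb : c ≤ b := min_le_left b τ
  have hfac : IntervalIntegrable f volume a c :=
    (hf.mono (Set.Icc_subset_Icc_right hcb)).intervalIntegrable_of_Icc hac
  have hfcb : IntervalIntegrable f volume c b :=
    (hf.mono (Set.Icc_subset_Icc_left hac)).intervalIntegrable_of_Icc hcb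
  have tail_eq_zero : ∫ x in c..b, f x = 0 := by
    refine intervalIntegral.integral_zero_ae (.of_forall fun x hx ↦ ?_)
    rw [Set.uIoc_of_le hcb] at hx
    have hτx : τ ≤ x := (min_lt_iff.1 hx.1).elim (fun h ↦ absurd hx.2 h.not_ge) le_of_lt
    exact hf0 x ⟨hac.trans hx.1.le, hx.2⟩ hτx
  calc ∫ x in a..b, f x = ∫ x in a..c, f x := by
        rw [← intervalIntegral.integral_add_adjacent_intervals hfac hfcb, tail_eq_zero, add_zero]
    _ ≤ ∫ _ in a..c, K :=
        intervalIntegral.integral_mono_on hac hfac intervalIntegrable_const fun x hx ↦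
          hfK x ⟨hx.1, hx.2.trans hcb⟩ (hx.2.trans (min_le_right b τ))
    _ = (c - a) * K := by rw [intervalIntegral.integral_const, smul_eq_mul]
    _ ≤ (τ - a) * K := by gcongr; exact min_le_right b τ

variable [NormedSpace ℝ F]

theorem norm_image_sub_le_integral_norm_deriv_right {f f' : ℝ → F} (hab : a ≤ b)
    (hf : ContinuousOn f (Set.Icc a b))
    (hff' : ∀ x ∈ Set.Ico a b, HasDerivWithinAt f (f' x) (Set.Ici x) x)
    (hf' : ContinuousOn f' (Set.Icc a b)) :
    ‖f b - f a‖ ≤ ∫ x in a..b, ‖f' x‖ := by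
  have hint : IntegrableOn (fun x ↦ ‖f' x‖) (Set.Icc a b) := hf'.norm.integrableOn_Icc
  have primitive_continuous : ContinuousOn (fun x ↦ ∫ y in a..x, ‖f' y‖) (Set.Icc a b) := by
    rw [← Set.uIcc_of_le hab] at hint ⊢
    exact intervalIntegral.continuousOn_primitive_interval hint
  have primitive_deriv (x : ℝ) (hx : x ∈ Set.Ico a b) :
      HasDerivWithinAt (fun x ↦ ∫ y in a..x, ‖f' y‖) ‖f' x‖ (Set.Ici x) x := by
    have hnhds : Set.Icc a b ∈ nhdsWithin x (Set.Ioi x) :=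
      Filter.mem_of_superset (Ioo_mem_nhdsGT hx.2) fun y hy ↦ ⟨hx.1.trans hy.1.le, hy.2.le⟩
    exact intervalIntegral.integral_hasDerivWithinAt_right
      ((hf'.norm.mono (Set.Icc_subset_Icc_right hx.2.le)).intervalIntegrable_of_Icc hx.1)
      ⟨Set.Icc a b, hnhds, hint.aestronglyMeasurable⟩
      ((hf'.norm x (Set.Ico_subset_Icc_self hx)).mono_of_mem_nhdsWithin hnhds)
  exact image_norm_le_of_norm_deriv_right_le_deriv_boundary' (hf.sub continuousOn_const)
    (fun x hx ↦ (hff' x hx).sub_const (f a)) (by simp) primitive_continuous primitive_deriv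
    (fun _ _ ↦ le_rfl) (Set.right_mem_Icc.2 hab)

theorem norm_image_sub_sq_le_mul_integral_norm_deriv_right_sq {f f' : ℝ → F} (hab : a ≤ b)
    (hf : ContinuousOn f (Set.Icc a b))
    (hff' : ∀ x ∈ Set.Ico a b, HasDerivWithinAt f (f' x) (Set.Ici x) x)
    (hf' : ContinuousOn f' (Set.Icc a b)) :
    ‖f b - f a‖ ^ 2 ≤ (b - a) * ∫ x in a..b, ‖f' x‖ ^ 2 :=
  calc ‖f b - f a‖ ^ 2 ≤ (∫ x in a..b, ‖f' x‖) ^ 2 := by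
        gcongr; exact norm_image_sub_le_integral_norm_deriv_right hab hf hff' hf'
    _ ≤ (b - a) * ∫ x in a..b, ‖f' x‖ ^ 2 :=
        sq_integral_le_mul_integral_sq hab (hf'.norm.intervalIntegrable_of_Icc hab)
          (intervalIntegrable_norm_sq hab hf')

theorem integral_norm_smul_sq_le {w : ℝ → ℝ} {f : ℝ → F} {κ : ℝ} (hab : a ≤ b)
    (hw : ContinuousOn w (Set.Icc a b)) (hf : ContinuousOn f (Set.Icc a b))
    (hwκ : ∀ x ∈ Set.Icc a b, |w x| ≤ κ) :
    ∫ x in a..b, ‖w x • f x‖ ^ 2 ≤ κ ^ 2 * ∫ x in a..b, ‖f x‖ ^ 2 := by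
  rw [← intervalIntegral.integral_const_mul]
  refine intervalIntegral.integral_mono_on hab (intervalIntegrable_norm_sq hab (hw.smul hf))
    ((intervalIntegrable_norm_sq hab hf).const_mul _) fun x hx ↦ ?_
  rw [norm_smul, mul_pow, Real.norm_eq_abs]
  gcongr
  exact hwκ x hx

theorem integral_norm_smul_const_sub_sq_le {w : ℝ → ℝ} {f f' : ℝ → F} {M τ : ℝ} (hab : a ≤ b)
    (haτ : a ≤ τ) (hw : ContinuousOn w (Set.Icc a b)) (hwM : ∀ x ∈ Set.Icc a b, |w x| ≤ M)
    (hw0 : ∀ x ∈ Set.Icc a b, τ ≤ x → w x = 0) (hf : ContinuousOn f (Set.Icc a b))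
    (hff' : ∀ x ∈ Set.Ico a b, HasDerivWithinAt f (f' x) (Set.Ici x) x)
    (hf' : ContinuousOn f' (Set.Icc a b)) (y : F) :
    ∫ x in a..b, ‖w x • (y - f x)‖ ^ 2
      ≤ (τ - a) * (M ^ 2 * (2 * (‖y - f a‖ ^ 2 + (τ - a) * ∫ x in a..b, ‖f' x‖ ^ 2))) := by
  have energy_nonneg : 0 ≤ ∫ x in a..b, ‖f' x‖ ^ 2 :=
    intervalIntegral.integral_nonneg hab fun _ _ ↦ by positivity
  have : 0 ≤ τ - a := sub_nonneg.2 haτ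
  have dist_sq_le (x : ℝ) (hx : x ∈ Set.Icc a b) (hxτ : x ≤ τ) :
      ‖y - f x‖ ^ 2 ≤ 2 * (‖y - f a‖ ^ 2 + (τ - a) * ∫ x in a..b, ‖f' x‖ ^ 2) :=
    calc ‖y - f x‖ ^ 2 = ‖(y - f a) - (f x - f a)‖ ^ 2 := by rw [sub_sub_sub_cancel_right]
      _ ≤ 2 * (‖y - f a‖ ^ 2 + ‖f x - f a‖ ^ 2) := norm_sub_sq_le_two_mul _ _
      _ ≤ 2 * (‖y - f a‖ ^ 2 + (x - a) * ∫ x in a..x, ‖f' x‖ ^ 2) := by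
          have hsub : Set.Icc a x ⊆ Set.Icc a b := Set.Icc_subset_Icc_right hx.2
          gcongr
          exact norm_image_sub_sq_le_mul_integral_norm_deriv_right_sq hx.1 (hf.mono hsub)
            (fun z hz ↦ hff' z ⟨hz.1, hz.2.trans_le hx.2⟩) (hf'.mono hsub)
      _ ≤ 2 * (‖y - f a‖ ^ 2 + (τ - a) * ∫ x in a..b, ‖f' x‖ ^ 2) := by
          gcongr
          · exact intervalIntegral.integral_nonneg hx.1 fun _ _ ↦ by positivity
          · exact integral_norm_sq_mono_right hf' hx.1 hx.2
  refine integral_le_mul_of_eq_zero_of_le ((hw.smul (continuousOn_const.sub hf)).norm.pow 2) hab haτ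
    (by positivity) (fun x hx hxτ ↦ ?_) (fun x hx hτx ↦ by simp [hw0 x hx hτx])
  rw [norm_smul, mul_pow, Real.norm_eq_abs]
  gcongr
  · exact hwM x hx
  · exact dist_sq_le x hx hxτ

end NormedSpace

theorem hasDerivAt_of_eq_add_integral {F : Type*} [NormedAddCommGroup F] [NormedSpace ℝ F]
    [CompleteSpace F] {f g : ℝ → F} {a : ℝ} {c : F} (hf : Continuous f)
    (hg : ∀ t, g t = c + ∫ s in a..t, f s) (t : ℝ) : HasDerivAt g (f t) t := by
  rw [funext hg]
  exact (intervalIntegral.integral_hasDerivAt_right (hf.intervalIntegrable a t)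
    hf.aestronglyMeasurable.stronglyMeasurableAtFilter hf.continuousAt).const_add c

section InnerProductSpace

variable {E : Type*} [NormedAddCommGroup E] [InnerProductSpace ℝ E] {ε : ℝ}

theorem inner_le_half_mul_norm_sq_add (hε : 0 < ε) (x y : E) :
    ⟪x, y⟫ ≤ ε / 2 * ‖y‖ ^ 2 + ‖x‖ ^ 2 / (2 * ε) := by
  have young : 0 ≤ (ε * ‖y‖ - ‖x‖) ^ 2 / (2 * ε) := by positivity
  calc ⟪x, y⟫ ≤ ‖x‖ * ‖y‖ := real_inner_le_norm x y
    _ ≤ ‖x‖ * ‖y‖ + (ε * ‖y‖ - ‖x‖) ^ 2 / (2 * ε) := le_add_of_nonneg_right young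
    _ = ε / 2 * ‖y‖ ^ 2 + ‖x‖ ^ 2 / (2 * ε) := by field_simp; ring

theorem inner_sub_le_half_mul_norm_sq_add (hε : 0 < ε) (x y z : E) :
    ⟪x - y, z⟫ ≤ ε / 2 * ‖z‖ ^ 2 + (‖x‖ ^ 2 + ‖y‖ ^ 2) / ε :=
  calc ⟪x - y, z⟫ ≤ ε / 2 * ‖z‖ ^ 2 + ‖x - y‖ ^ 2 / (2 * ε) :=
        inner_le_half_mul_norm_sq_add hε (x - y) z
    _ ≤ ε / 2 * ‖z‖ ^ 2 + 2 * (‖x‖ ^ 2 + ‖y‖ ^ 2) / (2 * ε) := by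
        gcongr; exact norm_sub_sq_le_two_mul x y
    _ = ε / 2 * ‖z‖ ^ 2 + (‖x‖ ^ 2 + ‖y‖ ^ 2) / ε := by rw [mul_div_mul_left _ _ two_ne_zero]

theorem integral_inner_sub_le {f g u : ℝ → E} {a b : ℝ} (hε : 0 < ε) (hab : a ≤ b)
    (hf : ContinuousOn f (Set.Icc a b)) (hg : ContinuousOn g (Set.Icc a b))
    (hu : ContinuousOn u (Set.Icc a b)) :
    ∫ x in a..b, ⟪f x - g x, u x⟫ ≤ ε / 2 * (∫ x in a..b, ‖u x‖ ^ 2)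
      + ((∫ x in a..b, ‖f x‖ ^ 2) + ∫ x in a..b, ‖g x‖ ^ 2) / ε := by
  have hf2 := intervalIntegrable_norm_sq hab hf
  have hg2 := intervalIntegrable_norm_sq hab hg
  have hu2 := intervalIntegrable_norm_sq hab hu
  rw [← intervalIntegral.integral_add hf2 hg2, ← intervalIntegral.integral_div,
    ← intervalIntegral.integral_const_mul,
    ← intervalIntegral.integral_add (hu2.const_mul _) ((hf2.add hg2).div_const _)]
  exact intervalIntegral.integral_mono_on hab
    (((hf.sub hg).inner hu).intervalIntegrable_of_Icc hab)
    ((hu2.const_mul _).add ((hf2.add hg2).div_const _))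
    fun x _ ↦ inner_sub_le_half_mul_norm_sq_add hε (f x) (g x) (u x)

theorem integral_inner_smul_const_sub_sub_smul_le {v w : ℝ → ℝ} {f f' u : ℝ → E} {a b M κ τ : ℝ}
    (hε : 0 < ε) (hab : a ≤ b) (haτ : a ≤ τ) (hw : ContinuousOn w (Set.Icc a b))
    (hwM : ∀ x ∈ Set.Icc a b, |w x| ≤ M) (hw0 : ∀ x ∈ Set.Icc a b, τ ≤ x → w x = 0)
    (hv : ContinuousOn v (Set.Icc a b)) (hvκ : ∀ x ∈ Set.Icc a b, |v x| ≤ κ)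
    (hf : ContinuousOn f (Set.Icc a b))
    (hff' : ∀ x ∈ Set.Ico a b, HasDerivWithinAt f (f' x) (Set.Ici x) x)
    (hf' : ContinuousOn f' (Set.Icc a b)) (hu : ContinuousOn u (Set.Icc a b)) (y : E) :
    ∫ x in a..b, ⟪w x • (y - f x) - v x • f' x, u x⟫ ≤ ε / 2 * (∫ x in a..b, ‖u x‖ ^ 2)
      + ((τ - a) * (M ^ 2 * (2 * (‖y - f a‖ ^ 2 + (τ - a) * ∫ x in a..b, ‖f' x‖ ^ 2)))
        + κ ^ 2 * ∫ x in a..b, ‖f' x‖ ^ 2) / ε := by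
  refine (integral_inner_sub_le hε hab (hw.smul (continuousOn_const.sub hf)) (hv.smul hf')
    hu).trans ?_
  gcongr
  · exact integral_norm_smul_const_sub_sq_le hab haτ hw hwM hw0 hf hff' hf' y
  · exact integral_norm_smul_sq_le hab hv hf' hvκ

theorem stmt8_general (ε M κ τ : ℝ) (hε : 0 < ε) (hτ : 0 ≤ τ) :
    ∃ C > (0 : ℝ), ∀ (h₁ : E) (kp kp' : ℝ → ℝ),
      (∀ s, 0 ≤ s → HasDerivWithinAt kp (kp' s) (Set.Ici 0) s) → ContinuousOn kp' (Set.Ici 0) →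
      (∀ s, 0 ≤ s → |kp s| ≤ κ) → (∀ s, 0 ≤ s → |kp' s| ≤ M) → (∀ s, τ ≤ s → kp' s = 0) →
      ∀ ℓ ℓ' : ℝ → E,
      (∀ s, 0 ≤ s → HasDerivWithinAt ℓ (ℓ' s) (Set.Ici 0) s) → ContinuousOn ℓ' (Set.Ici 0) →
      ∀ h : ℝ → E, (∀ s, 0 ≤ s → HasDerivWithinAt h (ℓ s) (Set.Ici 0) s) →
      ∀ T, ∀ t ∈ Set.Icc 0 T,
        (∫ s in (0 : ℝ)..t, ⟪kp' s • (h₁ - h s) - kp s • ℓ s, ℓ' s⟫)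
          ≤ C * (‖h₁ - h 0‖ ^ 2 + ∫ s in (0 : ℝ)..T, ‖ℓ s‖ ^ 2)
            + ε / 2 * ∫ s in (0 : ℝ)..T, ‖ℓ' s‖ ^ 2 := by
  refine ⟨(2 * M ^ 2 * τ * (1 + τ) + κ ^ 2 + 1) / ε, by positivity, ?_⟩
  intro h₁ kp kp' hkp hkp' hkpκ hkpM hkp0 ℓ ℓ' hℓ hℓ' h hh T t ⟨ht0, htT⟩
  have hsub {r : ℝ} : Set.Icc 0 r ⊆ Set.Ici 0 := Set.Icc_subset_Ici_self
  have ckp : ContinuousOn kp (Set.Ici 0) := fun s hs ↦ (hkp s hs).continuousWithinAt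
  have cℓ : ContinuousOn ℓ (Set.Ici 0) := fun s hs ↦ (hℓ s hs).continuousWithinAt
  have ch : ContinuousOn h (Set.Ici 0) := fun s hs ↦ (hh s hs).continuousWithinAt
  have estimate := integral_inner_smul_const_sub_sub_smul_le hε ht0 hτ (hkp'.mono hsub)
    (fun s hs ↦ hkpM s hs.1) (fun s _ ↦ hkp0 s) (ckp.mono hsub) (fun s hs ↦ hkpκ s hs.1)
    (ch.mono hsub) (fun s hs ↦ (hh s hs.1).mono (Set.Ici_subset_Ici.2 hs.1)) (cℓ.mono hsub)
    (hℓ'.mono hsub) h₁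
  have energy_mono := integral_norm_sq_mono_right (cℓ.mono hsub) ht0 htT
  have power_mono := integral_norm_sq_mono_right (hℓ'.mono hsub) ht0 htT
  have energy_nonneg : 0 ≤ ∫ s in (0 : ℝ)..T, ‖ℓ s‖ ^ 2 :=
    intervalIntegral.integral_nonneg (ht0.trans htT) fun _ _ ↦ by positivity
  rw [sub_zero] at estimate
  refine estimate.trans ?_
  rw [div_mul_eq_mul_div _ ε, add_comm]
  gcongr ?_ / ε + ε / 2 * ?_
  set A := ∫ s in (0 : ℝ)..T, ‖ℓ s‖ ^ 2
  calc _ ≤ τ * (M ^ 2 * (2 * (‖h₁ - h 0‖ ^ 2 + τ * A))) + κ ^ 2 * A := by gcongr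
    _ ≤ τ * (M ^ 2 * (2 * (‖h₁ - h 0‖ ^ 2 + τ * A))) + κ ^ 2 * A
        + ((2 * M ^ 2 * τ ^ 2 + κ ^ 2 + 1) * ‖h₁ - h 0‖ ^ 2 + (2 * M ^ 2 * τ + 1) * A) :=
      le_add_of_nonneg_right (by positivity)
    _ = (2 * M ^ 2 * τ * (1 + τ) + κ ^ 2 + 1) * (‖h₁ - h 0‖ ^ 2 + A) := by ring

end InnerProductSpace

/-- Estimate (2-RHS8): under the hypotheses (hypkp) on `k_p`, there is a constant `C > 0`
depending only on `k_d` and `T_I` such that for every `C¹` velocity `ℓ`, with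
`h t = h₀ + ∫₀ᵗ ℓ`, for all `T > 0` and `t ∈ [0,T]`,
`∫₀ᵗ (d/ds)[k_p (h₁−h)]·ℓ' ≤ C(|h₁−h₀|² + ∫₀ᵀ |ℓ|²) + (k_d/2)∫₀ᵀ |ℓ'|²`. -/
theorem stmt8 (kd TI : ℝ) (hkd : 0 < kd) (hTI : 0 < TI) :
    ∃ C > (0:ℝ), ∀ (h₀ h₁ : EuclideanSpace ℝ (Fin 3)) (kp kp' : ℝ → ℝ),
      (∀ s : ℝ, HasDerivAt kp (kp' s) s) → Continuous kp' → kp 0 = 0 →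
      (∀ s : ℝ, 0 ≤ s → kp s ∈ Set.Icc (0:ℝ) 1) →
      (∀ s : ℝ, 0 ≤ s → 0 ≤ kp' s ∧ kp' s ≤ kd / (2 * TI ^ 2)) →
      (∀ s : ℝ, TI ≤ s → kp' s = 0) →
      ∀ (ℓ ℓ' : ℝ → EuclideanSpace ℝ (Fin 3)),
      (∀ s : ℝ, HasDerivAt ℓ (ℓ' s) s) → Continuous ℓ' →
      ∀ h : ℝ → EuclideanSpace ℝ (Fin 3),
      (∀ t : ℝ, h t = h₀ + ∫ s in (0:ℝ)..t, ℓ s) →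
      ∀ T : ℝ, 0 < T → ∀ t ∈ Set.Icc (0:ℝ) T,
        (∫ s in (0:ℝ)..t, ⟪kp' s • (h₁ - h s) - kp s • ℓ s, ℓ' s⟫)
          ≤ C * (‖h₁ - h₀‖ ^ 2 + ∫ s in (0:ℝ)..T, ‖ℓ s‖ ^ 2)
            + (kd / 2) * ∫ s in (0:ℝ)..T, ‖ℓ' s‖ ^ 2 := by
  obtain ⟨C, hC, estimate⟩ := stmt8_general (E := EuclideanSpace ℝ (Fin 3)) kd
    (kd / (2 * TI ^ 2)) 1 TI hkd hTI.le
  refine ⟨C, hC, fun h₀ h₁ kp kp' hkp hkp' _ hkp1 hkpM hkp0 ℓ ℓ' hℓ hℓ' h hh T _ ↦ ?_⟩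
  have cℓ : Continuous ℓ := continuous_iff_continuousAt.2 fun s ↦ (hℓ s).continuousAt
  have h_zero : h 0 = h₀ := by simp [hh]
  rw [← h_zero]
  exact estimate h₁ kp kp' (fun s _ ↦ (hkp s).hasDerivWithinAt) hkp'.continuousOn
    (fun s hs ↦ (abs_of_nonneg (hkp1 s hs).1).trans_le (hkp1 s hs).2)
    (fun s hs ↦ (abs_of_nonneg (hkpM s hs).1).trans_le (hkpM s hs).2) hkp0
    ℓ ℓ' (fun s _ ↦ (hℓ s).hasDerivWithinAt) hℓ'.continuousOn
    h (fun s _ ↦ (hasDerivAt_of_eq_add_integral cℓ hh s).hasDerivWithinAt) T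
end
end

section
/- Let k_d > 0, T_I > 0, h₀, h₁ ∈ ℝ³, and let k_p : [0,∞) → [0,1] be continuously differentiable with k_p(0) = 0, 0 ≤ k_p'(s) ≤ k_d/(2T_I²) for all s, and k_p'(s) = 0 for s ≥ T_I. Then for every ε > 0 there exists a constant C > 0, depending only on ε, k_d and T_I, such that for every twice continuously differentiable ℓ : [0,∞) → ℝ³, setting h(t) = h₀ + ∫₀ᵗ ℓ(s) ds, one has for all T > 0 and all t ∈ [0,T]: |∫₀ᵗ ( −k_p'(s)(h₁ − h(s))·ℓ''(s) + k_p(s) ℓ(s)·ℓ''(s) ) ds| ≤ C(|h₁ − h₀|² + ∫₀ᵀ |ℓ(s)|² ds) + ε ∫₀ᵗ |ℓ''(s)|² ds. -/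
open MeasureTheory
open scoped RealInnerProductSpace

noncomputable section

/-!
The integrand is the inner product of `ℓ''` with `u = (k_p (h - h₁))' = k_p ℓ - k_p' (h₁ - h)`, so
by Young's inequality it suffices to bound `u` in `L²(0, t)` by the data. The part `k_p ℓ` is
immediate. For the other part, `|h₁ - h(s)|² ≤ 2 |h₁ - h₀|² + 2 s ∫₀ˢ |ℓ|²` by Jensen's inequality,
and since `k_p'` vanishes beyond `T_I` this growth in `s` is only felt for `s ≤ T_I`: that is why
the constant does not depend on `T`.
-/

open Set
open scoped ENNReal

section MeasureSpace

variable {α : Type*} [MeasurableSpace α] {μ : Measure α}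

theorem norm_integral_inner_le_add {𝕜 E : Type*} [RCLike 𝕜] [NormedAddCommGroup E]
    [InnerProductSpace 𝕜 E] {u w : α → E} (hu : MemLp u 2 μ) (hw : MemLp w 2 μ)
    {ε : ℝ} (hε : 0 < ε) :
    ‖∫ x, inner 𝕜 (u x) (w x) ∂μ‖ ≤ (4 * ε)⁻¹ * ∫ x, ‖u x‖ ^ 2 ∂μ + ε * ∫ x, ‖w x‖ ^ 2 ∂μ := by
  have hu' := (hu.integrable_norm_pow two_ne_zero).const_mul (4 * ε)⁻¹
  have hw' := (hw.integrable_norm_pow two_ne_zero).const_mul ε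
  rw [← integral_const_mul, ← integral_const_mul, ← integral_add hu' hw']
  refine norm_integral_le_of_norm_le (hu'.add hw') (.of_forall fun x ↦ ?_)
  have young := two_mul_le_add_mul_sq (a := ‖w x‖) (b := ‖u x‖) (ε := 2 * ε) (by positivity)
  calc ‖inner 𝕜 (u x) (w x)‖ ≤ ‖u x‖ * ‖w x‖ := norm_inner_le_norm _ _
    _ ≤ (2 * ε * ‖w x‖ ^ 2 + (2 * ε)⁻¹ * ‖u x‖ ^ 2) / 2 := by linarith
    _ = (4 * ε)⁻¹ * ‖u x‖ ^ 2 + ε * ‖w x‖ ^ 2 := by field_simp; ring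

theorem sq_norm_integral_le {E : Type*} [NormedAddCommGroup E] [NormedSpace ℝ E] [CompleteSpace E]
    [IsFiniteMeasure μ] {f : α → E} (hf : MemLp f 2 μ) :
    ‖∫ x, f x ∂μ‖ ^ 2 ≤ μ.real univ * ∫ x, ‖f x‖ ^ 2 ∂μ := by
  rcases eq_zero_or_neZero μ with rfl | _
  · simp
  have hμ : 0 < μ.real univ := measureReal_univ_pos
  have jensen : ‖⨍ x, f x ∂μ‖ ^ 2 ≤ ⨍ x, ‖f x‖ ^ 2 ∂μ :=
    (convexOn_univ_norm.pow (fun _ _ ↦ norm_nonneg _) 2).map_average_le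
      (by fun_prop) isClosed_univ (.of_forall fun _ ↦ mem_univ _)
      (hf.integrable one_le_two) (hf.integrable_norm_pow two_ne_zero)
  rw [average_eq, average_eq, norm_smul, mul_pow, smul_eq_mul, norm_inv,
    Real.norm_of_nonneg hμ.le] at jensen
  calc ‖∫ x, f x ∂μ‖ ^ 2
      = μ.real univ ^ 2 * ((μ.real univ)⁻¹ ^ 2 * ‖∫ x, f x ∂μ‖ ^ 2) := by field_simp
    _ ≤ μ.real univ ^ 2 * ((μ.real univ)⁻¹ * ∫ x, ‖f x‖ ^ 2 ∂μ) := by gcongr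
    _ = μ.real univ * ∫ x, ‖f x‖ ^ 2 ∂μ := by field_simp

theorem memLp_smul_of_bound {E : Type*} [NormedAddCommGroup E] [NormedSpace ℝ E] {p : ℝ≥0∞}
    {a : α → ℝ} {f : α → E} {M : ℝ} (ha : AEStronglyMeasurable a μ) (haM : ∀ᵐ x ∂μ, |a x| ≤ M)
    (hf : MemLp f p μ) : MemLp (fun x ↦ a x • f x) p μ :=
  hf.smul (memLp_top_of_bound ha M haM)

theorem memLp_restrict_of_continuousOn {X E : Type*} [TopologicalSpace X] [T2Space X]
    [MeasurableSpace X] [OpensMeasurableSpace X] {ν : Measure X} [IsFiniteMeasureOnCompacts ν]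
    [NormedAddCommGroup E] {p : ℝ≥0∞} {f : X → E} {s K : Set X} (hK : IsCompact K)
    (hsK : s ⊆ K) (hf : ContinuousOn f K) : MemLp f p (ν.restrict s) := by
  have : IsFiniteMeasure (ν.restrict K) := isFiniteMeasure_restrict.mpr hK.measure_lt_top.ne
  obtain ⟨C, hC⟩ := hK.exists_bound_of_continuousOn hf
  have hfK : MemLp f p (ν.restrict K) :=
    .of_bound (hf.aestronglyMeasurable_of_isCompact hK hK.measurableSet) C
      (ae_restrict_of_forall_mem hK.measurableSet hC)
  exact hfK.mono_measure (Measure.restrict_mono_set _ hsK)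

end MeasureSpace

theorem intervalIntegral_le_mul_of_eq_zero_of_le {f : ℝ → ℝ} {K τ t : ℝ} (hK : 0 ≤ K) (hτ : 0 ≤ τ)
    (ht : 0 ≤ t) (hfK : ∀ s ∈ Ioc 0 t, s ≤ τ → ‖f s‖ ≤ K) (hf : ∀ s ∈ Ioc 0 t, τ < s → f s = 0) :
    ∫ s in 0..t, f s ≤ K * τ := by
  have hmin : 0 ≤ min t τ := le_min ht hτ
  have truncate : ∫ s in 0..t, f s = ∫ s in 0..min t τ, f s := by
    rw [intervalIntegral.integral_of_le ht, intervalIntegral.integral_of_le hmin]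
    refine setIntegral_eq_of_subset_of_forall_sdiff_eq_zero measurableSet_Ioc
      (Ioc_subset_Ioc_right (min_le_left _ _)) fun s hs ↦ hf s hs.1 ?_
    by_contra! hsτ
    exact hs.2 ⟨hs.1.1, le_min hs.1.2 hsτ⟩
  calc ∫ s in 0..t, f s ≤ ‖∫ s in 0..min t τ, f s‖ := truncate ▸ Real.le_norm_self _
    _ ≤ K * |min t τ - 0| := by
      refine intervalIntegral.norm_integral_le_of_norm_le_const fun s hs ↦ ?_
      rw [uIoc_of_le hmin] at hs
      exact hfK s ⟨hs.1, hs.2.trans (min_le_left _ _)⟩ (hs.2.trans (min_le_right _ _))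
    _ ≤ K * τ := by
      rw [sub_zero, abs_of_nonneg hmin]
      gcongr
      exact min_le_right _ _

theorem intervalIntegral_sq_norm_mono {E : Type*} [NormedAddCommGroup E] {f : ℝ → E} {s t : ℝ}
    (hs : 0 ≤ s) (hst : s ≤ t) (hf : MemLp f 2 (volume.restrict (Ioc 0 t))) :
    ∫ r in 0..s, ‖f r‖ ^ 2 ≤ ∫ r in 0..t, ‖f r‖ ^ 2 :=
  intervalIntegral.integral_mono_interval le_rfl hs hst (.of_forall fun _ ↦ sq_nonneg _)
    ((intervalIntegrable_iff_integrableOn_Ioc_of_le (hs.trans hst)).mpr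
      (hf.integrable_norm_pow two_ne_zero))

section SpringTerm

variable {E : Type*} [NormedAddCommGroup E] [NormedSpace ℝ E]

/-- The position at time `t` of a point starting at `x₀` and moving with velocity `v`. -/
def trajectory (x₀ : E) (v : ℝ → E) (t : ℝ) : E :=
  x₀ + ∫ s in 0..t, v s

/-- The time derivative `b v - a (c - h)` of the spring term `b (h - c)`, where `h` is the
trajectory with initial position `x₀` and velocity `v`, and `c` is the target position. The
stiffness `b` and its derivative `a` enter as unrelated weights. -/
def springTermDeriv (a b : ℝ → ℝ) (x₀ c : E) (v : ℝ → E) (s : ℝ) : E :=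
  b s • v s - a s • (c - trajectory x₀ v s)

variable {a b : ℝ → ℝ} {x₀ c : E} {v : ℝ → E} {M β τ t : ℝ}

theorem memLp_sub_trajectory (ht : 0 ≤ t) (hv : MemLp v 2 (volume.restrict (Ioc 0 t))) :
    MemLp (fun s ↦ c - trajectory x₀ v s) 2 (volume.restrict (Ioc 0 t)) := by
  have hint : IntegrableOn v (uIcc 0 t) := by
    rw [uIcc_of_le ht, integrableOn_Icc_iff_integrableOn_Ioc]
    exact hv.integrable one_le_two
  have hcont : ContinuousOn (fun s ↦ c - trajectory x₀ v s) (Icc 0 t) :=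
    uIcc_of_le ht ▸ continuousOn_const.sub
      (continuousOn_const.add (intervalIntegral.continuousOn_primitive_interval hint))
  exact memLp_restrict_of_continuousOn isCompact_Icc Ioc_subset_Icc_self hcont

theorem memLp_springTermDeriv (ht : 0 ≤ t)
    (ha : AEStronglyMeasurable a (volume.restrict (Ioc 0 t)))
    (hb : AEStronglyMeasurable b (volume.restrict (Ioc 0 t)))
    (haM : ∀ s ∈ Ioc 0 t, |a s| ≤ M) (hbβ : ∀ s ∈ Ioc 0 t, |b s| ≤ β)
    (hv : MemLp v 2 (volume.restrict (Ioc 0 t))) :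
    MemLp (springTermDeriv a b x₀ c v) 2 (volume.restrict (Ioc 0 t)) :=
  (memLp_smul_of_bound hb (ae_restrict_of_forall_mem measurableSet_Ioc hbβ) hv).sub
    (memLp_smul_of_bound ha (ae_restrict_of_forall_mem measurableSet_Ioc haM)
      (memLp_sub_trajectory ht hv))

theorem sq_norm_sub_trajectory_le [CompleteSpace E] (ht : 0 ≤ t)
    (hv : MemLp v 2 (volume.restrict (Ioc 0 t))) :
    ‖c - trajectory x₀ v t‖ ^ 2 ≤ 2 * (‖c - x₀‖ ^ 2 + t * ∫ s in 0..t, ‖v s‖ ^ 2) := by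
  have displacement : ‖∫ s in 0..t, v s‖ ^ 2 ≤ t * ∫ s in 0..t, ‖v s‖ ^ 2 := by
    simpa [intervalIntegral.integral_of_le ht, ht] using sq_norm_integral_le hv
  calc ‖c - trajectory x₀ v t‖ ^ 2 ≤ (‖c - x₀‖ + ‖∫ s in 0..t, v s‖) ^ 2 := by
        rw [trajectory, ← sub_sub]
        gcongr
        exact norm_sub_le _ _
    _ ≤ 2 * (‖c - x₀‖ ^ 2 + ‖∫ s in 0..t, v s‖ ^ 2) := add_sq_le
    _ ≤ 2 * (‖c - x₀‖ ^ 2 + t * ∫ s in 0..t, ‖v s‖ ^ 2) := by gcongr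

theorem integral_sq_norm_smul_sub_trajectory_le [CompleteSpace E] (hτ : 0 ≤ τ) (ht : 0 ≤ t)
    (haM : ∀ s ∈ Ioc 0 t, |a s| ≤ M) (haτ : ∀ s ∈ Ioc 0 t, τ < s → a s = 0)
    (hv : MemLp v 2 (volume.restrict (Ioc 0 t))) :
    ∫ s in 0..t, ‖a s • (c - trajectory x₀ v s)‖ ^ 2 ≤
      M ^ 2 * (2 * (‖c - x₀‖ ^ 2 + τ * ∫ s in 0..t, ‖v s‖ ^ 2)) * τ := by
  have henergy : 0 ≤ ∫ s in 0..t, ‖v s‖ ^ 2 :=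
    intervalIntegral.integral_nonneg ht fun _ _ ↦ sq_nonneg _
  refine intervalIntegral_le_mul_of_eq_zero_of_le (by positivity) hτ ht (fun s hs hsτ ↦ ?_)
    fun s hs hτs ↦ by simp [haτ s hs hτs]
  have hvs : MemLp v 2 (volume.restrict (Ioc 0 s)) :=
    hv.mono_measure (Measure.restrict_mono_set _ (Ioc_subset_Ioc_right hs.2))
  have hoffset : ‖c - trajectory x₀ v s‖ ^ 2 ≤
      2 * (‖c - x₀‖ ^ 2 + τ * ∫ r in 0..t, ‖v r‖ ^ 2) := by
    refine (sq_norm_sub_trajectory_le hs.1.le hvs).trans ?_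
    gcongr
    · exact intervalIntegral.integral_nonneg hs.1.le fun _ _ ↦ sq_nonneg _
    · exact intervalIntegral_sq_norm_mono hs.1.le hs.2 hv
  rw [norm_pow, norm_norm, norm_smul, mul_pow, Real.norm_eq_abs]
  gcongr
  exact haM s hs

theorem integral_sq_norm_smul_le (ht : 0 ≤ t) (hbβ : ∀ s ∈ Ioc 0 t, |b s| ≤ β)
    (hv : MemLp v 2 (volume.restrict (Ioc 0 t))) :
    ∫ s in 0..t, ‖b s • v s‖ ^ 2 ≤ β ^ 2 * ∫ s in 0..t, ‖v s‖ ^ 2 := by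
  simp only [intervalIntegral.integral_of_le ht, ← integral_const_mul]
  refine integral_mono_of_nonneg (.of_forall fun _ ↦ sq_nonneg _)
    ((hv.integrable_norm_pow two_ne_zero).const_mul _)
    (ae_restrict_of_forall_mem measurableSet_Ioc fun s hs ↦ ?_)
  simp only [norm_smul, mul_pow, Real.norm_eq_abs]
  gcongr
  exact hbβ s hs

theorem integral_sq_norm_springTermDeriv_le [CompleteSpace E] (hτ : 0 ≤ τ) (ht : 0 ≤ t)
    (ha : AEStronglyMeasurable a (volume.restrict (Ioc 0 t)))
    (hb : AEStronglyMeasurable b (volume.restrict (Ioc 0 t)))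
    (haM : ∀ s ∈ Ioc 0 t, |a s| ≤ M) (haτ : ∀ s ∈ Ioc 0 t, τ < s → a s = 0)
    (hbβ : ∀ s ∈ Ioc 0 t, |b s| ≤ β) (hv : MemLp v 2 (volume.restrict (Ioc 0 t))) :
    ∫ s in 0..t, ‖springTermDeriv a b x₀ c v s‖ ^ 2 ≤
      (2 * β ^ 2 + 4 * M ^ 2 * τ * (1 + τ)) * (‖c - x₀‖ ^ 2 + ∫ s in 0..t, ‖v s‖ ^ 2) := by
  have hbv := memLp_smul_of_bound hb (ae_restrict_of_forall_mem measurableSet_Ioc hbβ) hv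
  have haf := memLp_smul_of_bound ha (ae_restrict_of_forall_mem measurableSet_Ioc haM)
    (memLp_sub_trajectory (x₀ := x₀) (c := c) ht hv)
  have split : ∫ s in 0..t, ‖springTermDeriv a b x₀ c v s‖ ^ 2 ≤
      2 * ((∫ s in 0..t, ‖b s • v s‖ ^ 2) +
        ∫ s in 0..t, ‖a s • (c - trajectory x₀ v s)‖ ^ 2) := by
    have hbv' := hbv.integrable_norm_pow two_ne_zero
    have haf' := haf.integrable_norm_pow two_ne_zero
    simp only [intervalIntegral.integral_of_le ht]
    rw [← integral_add hbv' haf', ← integral_const_mul]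
    exact integral_mono_of_nonneg (.of_forall fun _ ↦ sq_nonneg _)
      ((hbv'.add haf').const_mul 2)
      (.of_forall fun s ↦ (pow_le_pow_left₀ (norm_nonneg _) (norm_sub_le _ _) 2).trans add_sq_le)
  have hvelocity := integral_sq_norm_smul_le ht hbβ hv
  have hoffset := integral_sq_norm_smul_sub_trajectory_le (x₀ := x₀) (c := c) hτ ht haM haτ hv
  have henergy : 0 ≤ ∫ s in 0..t, ‖v s‖ ^ 2 :=
    intervalIntegral.integral_nonneg ht fun _ _ ↦ sq_nonneg _
  set D := ‖c - x₀‖ ^ 2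
  set I := ∫ s in 0..t, ‖v s‖ ^ 2
  have slack : 0 ≤ 2 * β ^ 2 * D + 4 * M ^ 2 * τ * (τ * D + I) := by positivity
  linarith

end SpringTerm

theorem abs_integral_inner_springTermDeriv_le {E : Type*} [NormedAddCommGroup E]
    [InnerProductSpace ℝ E] [CompleteSpace E] {a b : ℝ → ℝ} {x₀ c : E} {v w : ℝ → E}
    {M β τ t ε : ℝ} (hτ : 0 ≤ τ) (ht : 0 ≤ t) (hε : 0 < ε)
    (ha : AEStronglyMeasurable a (volume.restrict (Ioc 0 t)))
    (hb : AEStronglyMeasurable b (volume.restrict (Ioc 0 t)))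
    (haM : ∀ s ∈ Ioc 0 t, |a s| ≤ M) (haτ : ∀ s ∈ Ioc 0 t, τ < s → a s = 0)
    (hbβ : ∀ s ∈ Ioc 0 t, |b s| ≤ β) (hv : MemLp v 2 (volume.restrict (Ioc 0 t)))
    (hw : MemLp w 2 (volume.restrict (Ioc 0 t))) :
    |∫ s in 0..t, ⟪springTermDeriv a b x₀ c v s, w s⟫| ≤
      (4 * ε)⁻¹ * ((2 * β ^ 2 + 4 * M ^ 2 * τ * (1 + τ)) *
        (‖c - x₀‖ ^ 2 + ∫ s in 0..t, ‖v s‖ ^ 2)) + ε * ∫ s in 0..t, ‖w s‖ ^ 2 := by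
  have young := norm_integral_inner_le_add (𝕜 := ℝ)
    (memLp_springTermDeriv (x₀ := x₀) (c := c) ht ha hb haM hbβ hv) hw hε
  simp only [← intervalIntegral.integral_of_le ht, Real.norm_eq_abs] at young
  refine young.trans ?_
  gcongr
  exact integral_sq_norm_springTermDeriv_le hτ ht ha hb haM haτ hbβ hv

theorem stmt9_general {E : Type*} [NormedAddCommGroup E] [InnerProductSpace ℝ E] [CompleteSpace E]
    (M β τ : ℝ) (hτ : 0 ≤ τ) (ε : ℝ) (hε : 0 < ε) :
    ∃ C > (0 : ℝ), ∀ (T : ℝ) (x₀ c : E) (a b : ℝ → ℝ),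
      AEStronglyMeasurable a (volume.restrict (Ioc 0 T)) →
      AEStronglyMeasurable b (volume.restrict (Ioc 0 T)) →
      (∀ s ∈ Ioc 0 T, |a s| ≤ M) → (∀ s ∈ Ioc 0 T, τ < s → a s = 0) →
      (∀ s ∈ Ioc 0 T, |b s| ≤ β) →
      ∀ v w : ℝ → E, MemLp v 2 (volume.restrict (Ioc 0 T)) →
      MemLp w 2 (volume.restrict (Ioc 0 T)) →
      ∀ h : ℝ → E, (∀ t, h t = x₀ + ∫ s in 0..t, v s) →
      ∀ t ∈ Icc 0 T,
        |∫ s in 0..t, (-(a s * ⟪c - h s, w s⟫) + b s * ⟪v s, w s⟫)|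
          ≤ C * (‖c - x₀‖ ^ 2 + ∫ s in 0..T, ‖v s‖ ^ 2) + ε * ∫ s in 0..t, ‖w s‖ ^ 2 := by
  refine ⟨(4 * ε)⁻¹ * (2 * β ^ 2 + 4 * M ^ 2 * τ * (1 + τ) + 1), by positivity, ?_⟩
  intro T x₀ c a b ha hb haM haτ hbβ v w hv hw h hh t ⟨ht, htT⟩
  obtain rfl : h = trajectory x₀ v := funext hh
  have hsub : Ioc 0 t ⊆ Ioc 0 T := Ioc_subset_Ioc_right htT
  have hμ : volume.restrict (Ioc 0 t) ≤ volume.restrict (Ioc 0 T) :=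
    Measure.restrict_mono_set _ hsub
  have pairing : ∀ s, -(a s * ⟪c - trajectory x₀ v s, w s⟫) + b s * ⟪v s, w s⟫ =
      ⟪springTermDeriv a b x₀ c v s, w s⟫ := fun s ↦ by
    simp only [springTermDeriv, inner_sub_left, real_inner_smul_left]
    ring
  have henergy : 0 ≤ ∫ s in 0..t, ‖v s‖ ^ 2 :=
    intervalIntegral.integral_nonneg ht fun _ _ ↦ sq_nonneg _
  simp only [pairing]
  refine (abs_integral_inner_springTermDeriv_le hτ ht hε (ha.mono_measure hμ)
    (hb.mono_measure hμ) (fun s hs ↦ haM s (hsub hs)) (fun s hs ↦ haτ s (hsub hs))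
    (fun s hs ↦ hbβ s (hsub hs)) (hv.mono_measure hμ) (hw.mono_measure hμ)).trans ?_
  rw [mul_assoc (4 * ε)⁻¹]
  gcongr _ * (?_ * (_ + ?_)) + _
  · exact le_add_of_nonneg_right zero_le_one
  · exact intervalIntegral_sq_norm_mono ht htT hv

/-- Estimate (derivative of spring term): under the hypotheses (hypkp) on `k_p`, for every
`ε > 0` there is `C > 0` depending only on `ε`, `k_d`, `T_I` such that for every `C²`
velocity `ℓ`, with `h t = h₀ + ∫₀ᵗ ℓ`, for all `T > 0` and `t ∈ [0,T]`,
`|∫₀ᵗ (−k_p'(h₁−h)·ℓ'' + k_p ℓ·ℓ'')| ≤ C(|h₁−h₀|² + ∫₀ᵀ |ℓ|²) + ε ∫₀ᵗ |ℓ''|²`. -/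
theorem stmt9 (kd TI : ℝ) (hkd : 0 < kd) (hTI : 0 < TI) :
    ∀ ε : ℝ, 0 < ε →
    ∃ C > (0:ℝ), ∀ (h₀ h₁ : EuclideanSpace ℝ (Fin 3)) (kp kp' : ℝ → ℝ),
      (∀ s : ℝ, HasDerivAt kp (kp' s) s) → Continuous kp' → kp 0 = 0 →
      (∀ s : ℝ, 0 ≤ s → kp s ∈ Set.Icc (0:ℝ) 1) →
      (∀ s : ℝ, 0 ≤ s → 0 ≤ kp' s ∧ kp' s ≤ kd / (2 * TI ^ 2)) →
      (∀ s : ℝ, TI ≤ s → kp' s = 0) →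
      ∀ (ℓ ℓ' ℓ'' : ℝ → EuclideanSpace ℝ (Fin 3)),
      (∀ s : ℝ, HasDerivAt ℓ (ℓ' s) s) → (∀ s : ℝ, HasDerivAt ℓ' (ℓ'' s) s) →
      Continuous ℓ'' →
      ∀ h : ℝ → EuclideanSpace ℝ (Fin 3),
      (∀ t : ℝ, h t = h₀ + ∫ s in (0:ℝ)..t, ℓ s) →
      ∀ T : ℝ, 0 < T → ∀ t ∈ Set.Icc (0:ℝ) T,
        |∫ s in (0:ℝ)..t, (-(kp' s * ⟪h₁ - h s, ℓ'' s⟫) + kp s * ⟪ℓ s, ℓ'' s⟫)|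
          ≤ C * (‖h₁ - h₀‖ ^ 2 + ∫ s in (0:ℝ)..T, ‖ℓ s‖ ^ 2)
            + ε * ∫ s in (0:ℝ)..t, ‖ℓ'' s‖ ^ 2 := by
  intro ε hε
  obtain ⟨C, hC, bound⟩ := stmt9_general (E := EuclideanSpace ℝ (Fin 3))
    (kd / (2 * TI ^ 2)) 1 TI hTI.le ε hε
  refine ⟨C, hC, fun h₀ h₁ kp kp' hkp hkp'c _ hkpI hkp'M hkp'TI ℓ ℓ' ℓ'' hℓ _ hℓ''c h hh T _ ↦
    bound T h₀ h₁ kp' kp hkp'c.aestronglyMeasurable ?_ (fun s hs ↦ ?_)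
      (fun s _ hs ↦ hkp'TI s hs.le) (fun s hs ↦ ?_) ℓ ℓ'' ?_ ?_ h hh⟩
  · exact (HasDerivAt.continuousOn fun s _ ↦ hkp s).aestronglyMeasurable measurableSet_Ioc
  · exact (abs_of_nonneg (hkp'M s hs.1.le).1).trans_le (hkp'M s hs.1.le).2
  · exact (abs_of_nonneg (hkpI s hs.1.le).1).trans_le (hkpI s hs.1.le).2
  · exact memLp_restrict_of_continuousOn isCompact_Icc Ioc_subset_Icc_self
      (HasDerivAt.continuousOn fun s _ ↦ hℓ s)
  · exact memLp_restrict_of_continuousOn isCompact_Icc Ioc_subset_Icc_self hℓ''c.continuousOn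
end
end

section
/- Let k_d > 0, T_I > 0, h₀, h₁ ∈ ℝ³, and let k_p : [0,∞) → [0,1] be continuously differentiable with k_p(0) = 0, 0 ≤ k_p'(s) ≤ k_d/(2T_I²) for all s, and k_p'(s) = 0 for s ≥ T_I. Then there exists a constant C > 0, depending only on k_d and T_I, such that for every continuously differentiable ℓ : [0,∞) → ℝ³, setting h(t) = h₀ + ∫₀ᵗ ℓ(s) ds, one has for every t ≥ 0: |∫₀ᵗ k_p(s)(h₁ − h(s))·ℓ'(s) ds| ≤ C( |h₁ − h₀|² + k_p(t)|h₁ − h(t)|² + |ℓ(t)|² + ∫₀ᵗ |ℓ(s)|² ds ). -/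
open MeasureTheory
open scoped RealInnerProductSpace

noncomputable section

/-!
Integrating by parts moves the derivative off `ℓ`:
`∫ k ⟪h₁ - h, ℓ'⟫ = k(t) ⟪h₁ - h(t), ℓ(t)⟫ - ∫ k' ⟪h₁ - h, ℓ⟫ + ∫ k ‖ℓ‖²`.
Young's inequality handles the boundary term and the boundedness of `k` the last one. In the middle
term `k'` vanishes after time `T`, and up to time `T` Cauchy-Schwarz gives
`‖h₁ - h‖² ≤ 2 (‖h₁ - h(0)‖² + T ∫ ‖ℓ‖²)`, so that the constant does not depend on `t`.
-/

open Set

theorem sq_integral_le_measureReal_mul_integral_sq {α : Type*} [MeasurableSpace α] {μ : Measure α}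
    [IsFiniteMeasure μ] {f : α → ℝ} (hf : Integrable f μ) (hf2 : Integrable (fun x => f x ^ 2) μ) :
    (∫ x, f x ∂μ) ^ 2 ≤ μ.real univ * ∫ x, f x ^ 2 ∂μ := by
  rcases eq_zero_or_neZero μ with rfl | hμ
  · simp
  have hm : 0 < μ.real univ := measureReal_univ_pos
  have jensen : (⨍ x, f x ∂μ) ^ 2 ≤ ⨍ x, f x ^ 2 ∂μ :=
    (even_two.convexOn_pow (𝕜 := ℝ)).map_average_le (continuous_pow 2).continuousOn isClosed_univ
      (.of_forall fun _ => mem_univ _) hf hf2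
  rw [average_eq, average_eq, smul_eq_mul, smul_eq_mul, mul_pow, inv_pow,
    inv_mul_le_iff₀ (by positivity)] at jensen
  exact jensen.trans_eq (by field_simp)

theorem sq_intervalIntegral_le_mul_integral_sq {f : ℝ → ℝ} {a b : ℝ} (hab : a ≤ b)
    (hf : ContinuousOn f (Icc a b)) :
    (∫ s in a..b, f s) ^ 2 ≤ (b - a) * ∫ s in a..b, f s ^ 2 := by
  simpa [intervalIntegral.integral_of_le hab, hab] using
    sq_integral_le_measureReal_mul_integral_sq (μ := volume.restrict (Ioc a b))
      (hf.intervalIntegrable_of_Icc hab).1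
      ((hf.pow 2).intervalIntegrable_of_Icc hab).1

theorem integral_sq_norm_mono {E : Type*} [NormedAddCommGroup E] {f : ℝ → E} {a b c : ℝ}
    (hf : ContinuousOn f (Icc a b)) (hac : a ≤ c) (hcb : c ≤ b) :
    ∫ s in a..c, ‖f s‖ ^ 2 ≤ ∫ s in a..b, ‖f s‖ ^ 2 :=
  intervalIntegral.integral_mono_interval le_rfl hac hcb (.of_forall fun _ => sq_nonneg _)
    ((hf.norm.pow 2).intervalIntegrable_of_Icc (hac.trans hcb))

theorem intervalIntegral_eq_integral_min_of_eq_zero {E : Type*} [NormedAddCommGroup E]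
    [NormedSpace ℝ E] {f : ℝ → E} {a b c : ℝ} (hab : a ≤ b) (hac : a ≤ c)
    (hf : ∀ s ∈ Icc a b, c ≤ s → f s = 0) :
    ∫ s in a..b, f s = ∫ s in a..min b c, f s := by
  rw [intervalIntegral.integral_of_le hab, intervalIntegral.integral_of_le (le_min hab hac)]
  refine setIntegral_eq_of_subset_of_forall_sdiff_eq_zero measurableSet_Ioc
    (Ioc_subset_Ioc_right (min_le_left b c)) fun s ⟨hs, hsc⟩ => hf s (Ioc_subset_Icc_self hs) ?_
  by_contra! hlt
  exact hsc ⟨hs.1, le_min hs.2 hlt.le⟩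

section Displacement

variable {E : Type*} [NormedAddCommGroup E] [NormedSpace ℝ E] {f f' : ℝ → E} {a b c M : ℝ}

theorem hasDerivAt_of_hasDerivWithinAt_Icc
    (hf : ∀ s ∈ Icc a b, HasDerivWithinAt f (f' s) (Icc a b) s) :
    ∀ s ∈ Ioo a b, HasDerivAt f (f' s) s := fun s hs =>
  (hf s (Ioo_subset_Icc_self hs)).hasDerivAt (Icc_mem_nhds hs.1 hs.2)

theorem sq_norm_sub_le_mul_integral_sq_norm_deriv (hab : a ≤ b)
    (hf : ∀ s ∈ Icc a b, HasDerivWithinAt f (f' s) (Icc a b) s) (hf' : ContinuousOn f' (Icc a b)) :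
    ‖f b - f a‖ ^ 2 ≤ (b - a) * ∫ s in a..b, ‖f' s‖ ^ 2 := by
  have hderiv := hasDerivAt_of_hasDerivWithinAt_Icc hf
  have hlength : ‖f b - f a‖ ≤ ∫ s in a..b, ‖f' s‖ :=
    norm_sub_le_integral_of_norm_deriv_le_of_le hab (HasDerivWithinAt.continuousOn hf)
      (fun s hs => (hderiv s hs).differentiableAt.differentiableWithinAt)
      (.of_forall fun s hs => by rw [(hderiv s hs).deriv])
      (hf'.norm.intervalIntegrable_of_Icc hab)
  calc ‖f b - f a‖ ^ 2 ≤ (∫ s in a..b, ‖f' s‖) ^ 2 := by gcongr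
    _ ≤ (b - a) * ∫ s in a..b, ‖f' s‖ ^ 2 := sq_intervalIntegral_le_mul_integral_sq hab hf'.norm

theorem sq_norm_sub_le_of_hasDerivWithinAt_Icc
    (hf : ∀ s ∈ Icc a b, HasDerivWithinAt f (f' s) (Icc a b) s) (hf' : ContinuousOn f' (Icc a b))
    (hc : c ∈ Icc a b) (x : E) :
    ‖x - f c‖ ^ 2 ≤ 2 * (‖x - f a‖ ^ 2 + (c - a) * ∫ s in a..b, ‖f' s‖ ^ 2) := by
  have hsub : Icc a c ⊆ Icc a b := Icc_subset_Icc_right hc.2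
  have hdisp : ‖f c - f a‖ ^ 2 ≤ (c - a) * ∫ s in a..b, ‖f' s‖ ^ 2 :=
    calc ‖f c - f a‖ ^ 2 ≤ (c - a) * ∫ s in a..c, ‖f' s‖ ^ 2 :=
          sq_norm_sub_le_mul_integral_sq_norm_deriv hc.1
            (fun s hs => (hf s (hsub hs)).mono hsub) (hf'.mono hsub)
      _ ≤ (c - a) * ∫ s in a..b, ‖f' s‖ ^ 2 :=
          mul_le_mul_of_nonneg_left (integral_sq_norm_mono hf' hc.1 hc.2) (sub_nonneg.2 hc.1)
  calc ‖x - f c‖ ^ 2 = ‖(x - f a) - (f c - f a)‖ ^ 2 := by rw [sub_sub_sub_cancel_right]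
    _ ≤ (‖x - f a‖ + ‖f c - f a‖) ^ 2 := by gcongr; exact norm_sub_le _ _
    _ ≤ 2 * (‖x - f a‖ ^ 2 + ‖f c - f a‖ ^ 2) := add_sq_le
    _ ≤ 2 * (‖x - f a‖ ^ 2 + (c - a) * ∫ s in a..b, ‖f' s‖ ^ 2) := by gcongr

theorem norm_sub_le_mul_of_deriv_eq_zero_of_ge (hab : a ≤ b) (hac : a ≤ c)
    (hf : ∀ s ∈ Icc a b, HasDerivWithinAt f (f' s) (Icc a b) s)
    (hM : ∀ s ∈ Icc a b, ‖f' s‖ ≤ M) (hc : ∀ s ∈ Icc a b, c ≤ s → f' s = 0) :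
    ‖f b - f a‖ ≤ M * (c - a) := by
  have hM0 : 0 ≤ M := (norm_nonneg _).trans (hM a (left_mem_Icc.2 hab))
  have hderiv := hasDerivAt_of_hasDerivWithinAt_Icc hf
  have hsupp : {s ∈ Ioo a b | deriv f s ≠ 0} ⊆ Ioo a c := fun s ⟨hs, hne⟩ => by
    refine ⟨hs.1, lt_of_not_ge fun hcs => hne ?_⟩
    rw [(hderiv s hs).deriv, hc s (Ioo_subset_Icc_self hs) hcs]
  calc ‖f b - f a‖ ≤ M * volume.real {s ∈ Ioo a b | deriv f s ≠ 0} :=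
        norm_sub_le_mul_volume_of_norm_deriv_le_of_le hab (HasDerivWithinAt.continuousOn hf)
          (fun s hs => (hderiv s hs).differentiableAt.differentiableWithinAt)
          (.of_forall fun s hs => (hderiv s hs).deriv ▸ hM s (Ioo_subset_Icc_self hs))
    _ ≤ M * volume.real (Ioo a c) := by gcongr; exact measure_Ioo_lt_top.ne
    _ = M * (c - a) := by rw [Real.volume_real_Ioo_of_le hac]

end Displacement

section InnerProduct

variable {E : Type*} [NormedAddCommGroup E] [InnerProductSpace ℝ E]
  {k k' : ℝ → ℝ} {u u' v v' : ℝ → E} {a b K : ℝ}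

theorem integral_mul_inner_deriv_eq (hab : a ≤ b)
    (hk : ∀ s ∈ Icc a b, HasDerivWithinAt k (k' s) (Icc a b) s) (hk' : ContinuousOn k' (Icc a b))
    (hu : ∀ s ∈ Icc a b, HasDerivWithinAt u (u' s) (Icc a b) s) (hu' : ContinuousOn u' (Icc a b))
    (hv : ∀ s ∈ Icc a b, HasDerivWithinAt v (v' s) (Icc a b) s) (hv' : ContinuousOn v' (Icc a b)) :
    ∫ s in a..b, k s * ⟪u s, v' s⟫ = k b * ⟪u b, v b⟫ - k a * ⟪u a, v a⟫
      - (∫ s in a..b, k' s * ⟪u s, v s⟫) - ∫ s in a..b, k s * ⟪u' s, v s⟫ := by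
  have hkc := HasDerivWithinAt.continuousOn hk
  have huc := HasDerivWithinAt.continuousOn hu
  have hvc := HasDerivWithinAt.continuousOn hv
  have hdk : IntervalIntegrable (fun s => k' s * ⟪u s, v s⟫) volume a b :=
    (hk'.mul (huc.inner hvc)).intervalIntegrable_of_Icc hab
  have hdv : IntervalIntegrable (fun s => k s * ⟪u s, v' s⟫) volume a b :=
    (hkc.mul (huc.inner hv')).intervalIntegrable_of_Icc hab
  have hdu : IntervalIntegrable (fun s => k s * ⟪u' s, v s⟫) volume a b :=
    (hkc.mul (hu'.inner hvc)).intervalIntegrable_of_Icc hab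
  have hderiv : ∀ s ∈ Icc a b, HasDerivWithinAt (fun s => k s * ⟪u s, v s⟫)
      (k' s * ⟪u s, v s⟫ + k s * ⟪u s, v' s⟫ + k s * ⟪u' s, v s⟫) (Icc a b) s := fun s hs => by
    rw [add_assoc, ← mul_add]
    exact (hk s hs).mul ((hu s hs).inner ℝ (hv s hs))
  have ftc := intervalIntegral.integral_eq_sub_of_hasDerivAt_of_le hab
    (HasDerivWithinAt.continuousOn hderiv) (hasDerivAt_of_hasDerivWithinAt_Icc hderiv)
    ((hdk.add hdv).add hdu)
  rw [intervalIntegral.integral_add (hdk.add hdv) hdu, intervalIntegral.integral_add hdk hdv] at ftc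
  linarith

theorem abs_mul_inner_le_of_abs_le {r : ℝ} (hr : |r| ≤ K) (x y : E) :
    |r * ⟪x, y⟫| ≤ (|r| * ‖x‖ ^ 2 + K * ‖y‖ ^ 2) / 2 :=
  calc |r * ⟪x, y⟫| = |r| * |⟪x, y⟫| := abs_mul _ _
    _ ≤ |r| * (‖x‖ * ‖y‖) := by gcongr; exact abs_real_inner_le_norm x y
    _ ≤ |r| * ((‖x‖ ^ 2 + ‖y‖ ^ 2) / 2) := by
        gcongr; linarith [two_mul_le_add_sq ‖x‖ ‖y‖]
    _ = (|r| * ‖x‖ ^ 2 + |r| * ‖y‖ ^ 2) / 2 := by ring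
    _ ≤ (|r| * ‖x‖ ^ 2 + K * ‖y‖ ^ 2) / 2 := by gcongr

theorem abs_integral_mul_inner_le {B : ℝ} (hab : a ≤ b) (hk : ∀ s ∈ Icc a b, |k s| ≤ K)
    (hu : ∀ s ∈ Icc a b, ‖u s‖ ^ 2 ≤ B) (hv : ContinuousOn v (Icc a b)) :
    |∫ s in a..b, k s * ⟪u s, v s⟫| ≤ K / 2 * ((b - a) * B + ∫ s in a..b, ‖v s‖ ^ 2) := by
  have hv2 : IntervalIntegrable (fun s => ‖v s‖ ^ 2) volume a b :=
    (hv.norm.pow 2).intervalIntegrable_of_Icc hab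
  have hpt : ∀ s ∈ Icc a b, ‖k s * ⟪u s, v s⟫‖ ≤ K / 2 * (B + ‖v s‖ ^ 2) := fun s hs =>
    calc ‖k s * ⟪u s, v s⟫‖ ≤ (|k s| * ‖u s‖ ^ 2 + K * ‖v s‖ ^ 2) / 2 :=
          abs_mul_inner_le_of_abs_le (hk s hs) _ _
      _ ≤ (K * B + K * ‖v s‖ ^ 2) / 2 := by
          gcongr
          exacts [(abs_nonneg _).trans (hk s hs), hk s hs, hu s hs]
      _ = K / 2 * (B + ‖v s‖ ^ 2) := by ring
  rw [← Real.norm_eq_abs]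
  calc ‖∫ s in a..b, k s * ⟪u s, v s⟫‖ ≤ ∫ s in a..b, K / 2 * (B + ‖v s‖ ^ 2) :=
        intervalIntegral.norm_integral_le_of_norm_le hab
          (.of_forall fun s hs => hpt s (Ioc_subset_Icc_self hs))
          ((intervalIntegrable_const.add hv2).const_mul (K / 2))
    _ = K / 2 * ((b - a) * B + ∫ s in a..b, ‖v s‖ ^ 2) := by
        rw [intervalIntegral.integral_const_mul,
          intervalIntegral.integral_add intervalIntegrable_const hv2,
          intervalIntegral.integral_const, smul_eq_mul]

theorem abs_integral_mul_inner_neg_self_le (hab : a ≤ b) (hk : ∀ s ∈ Icc a b, |k s| ≤ K)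
    (hv : ContinuousOn v (Icc a b)) :
    |∫ s in a..b, k s * ⟪-v s, v s⟫| ≤ K * ∫ s in a..b, ‖v s‖ ^ 2 := by
  have hv2 : IntervalIntegrable (fun s => ‖v s‖ ^ 2) volume a b :=
    (hv.norm.pow 2).intervalIntegrable_of_Icc hab
  have hpt : ∀ s ∈ Icc a b, ‖k s * ⟪-v s, v s⟫‖ ≤ K * ‖v s‖ ^ 2 := fun s hs => by
    rw [Real.norm_eq_abs, inner_neg_left, real_inner_self_eq_norm_sq, abs_mul, abs_neg, abs_sq]
    gcongr
    exact hk s hs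
  rw [← Real.norm_eq_abs, ← intervalIntegral.integral_const_mul]
  exact intervalIntegral.norm_integral_le_of_norm_le hab
    (.of_forall fun s hs => hpt s (Ioc_subset_Icc_self hs)) (hv2.const_mul K)

end InnerProduct

section Feedback

variable {E : Type*} [NormedAddCommGroup E] [InnerProductSpace ℝ E]
  {M T t : ℝ} {k k' : ℝ → ℝ} {h ℓ ℓ' : ℝ → E}

theorem abs_integral_mul_inner_sub_le (hT : 0 ≤ T) (ht : 0 ≤ t)
    (hkM : ∀ s ∈ Icc 0 t, |k s| ≤ M) (hkT : ∀ s ∈ Icc 0 t, T ≤ s → k s = 0)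
    (hh : ∀ s ∈ Icc 0 t, HasDerivWithinAt h (ℓ s) (Icc 0 t) s) (hℓ : ContinuousOn ℓ (Icc 0 t))
    (h₁ : E) :
    |∫ s in (0 : ℝ)..t, k s * ⟪h₁ - h s, ℓ s⟫| ≤
      M * T * ‖h₁ - h 0‖ ^ 2 + M * (T ^ 2 + 1 / 2) * ∫ s in (0 : ℝ)..t, ‖ℓ s‖ ^ 2 := by
  set L := ∫ s in (0 : ℝ)..t, ‖ℓ s‖ ^ 2
  have hM : 0 ≤ M := (abs_nonneg _).trans (hkM 0 (left_mem_Icc.2 ht))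
  have hL : 0 ≤ L := intervalIntegral.integral_nonneg ht fun s _ => by positivity
  have hτ : 0 ≤ min t T := le_min ht hT
  have hsub : Icc 0 (min t T) ⊆ Icc 0 t := Icc_subset_Icc_right (min_le_left t T)
  have hoffset : ∀ s ∈ Icc 0 (min t T), ‖h₁ - h s‖ ^ 2 ≤ 2 * (‖h₁ - h 0‖ ^ 2 + T * L) := by
    intro s hs
    calc ‖h₁ - h s‖ ^ 2 ≤ 2 * (‖h₁ - h 0‖ ^ 2 + (s - 0) * L) :=
          sq_norm_sub_le_of_hasDerivWithinAt_Icc hh hℓ (hsub hs) h₁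
      _ ≤ 2 * (‖h₁ - h 0‖ ^ 2 + T * L) := by
          rw [sub_zero]
          gcongr
          exact hs.2.trans (min_le_right t T)
  rw [intervalIntegral_eq_integral_min_of_eq_zero ht hT
    fun s hs hTs => by rw [hkT s hs hTs, zero_mul]]
  calc |∫ s in (0 : ℝ)..min t T, k s * ⟪h₁ - h s, ℓ s⟫|
      ≤ M / 2 * ((min t T - 0) * (2 * (‖h₁ - h 0‖ ^ 2 + T * L))
          + ∫ s in (0 : ℝ)..min t T, ‖ℓ s‖ ^ 2) :=
        abs_integral_mul_inner_le hτ (fun s hs => hkM s (hsub hs)) hoffset (hℓ.mono hsub)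
    _ ≤ M / 2 * (T * (2 * (‖h₁ - h 0‖ ^ 2 + T * L)) + L) := by
        rw [sub_zero]
        gcongr
        exacts [min_le_right t T, integral_sq_norm_mono hℓ hτ (min_le_left t T)]
    _ = M * T * ‖h₁ - h 0‖ ^ 2 + M * (T ^ 2 + 1 / 2) * L := by ring

theorem stmt16_general (hT : 0 ≤ T) (ht : 0 ≤ t)
    (hk : ∀ s ∈ Icc 0 t, HasDerivWithinAt k (k' s) (Icc 0 t) s) (hk' : ContinuousOn k' (Icc 0 t))
    (hk0 : k 0 = 0) (hk'M : ∀ s ∈ Icc 0 t, |k' s| ≤ M) (hk'T : ∀ s ∈ Icc 0 t, T ≤ s → k' s = 0)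
    (hh : ∀ s ∈ Icc 0 t, HasDerivWithinAt h (ℓ s) (Icc 0 t) s)
    (hℓ : ∀ s ∈ Icc 0 t, HasDerivWithinAt ℓ (ℓ' s) (Icc 0 t) s) (hℓ' : ContinuousOn ℓ' (Icc 0 t))
    (h₁ : E) :
    |∫ s in (0 : ℝ)..t, k s * ⟪h₁ - h s, ℓ' s⟫| ≤
      (1 + M * (1 + T + T ^ 2)) * (‖h₁ - h 0‖ ^ 2 + |k t| * ‖h₁ - h t‖ ^ 2 + ‖ℓ t‖ ^ 2
        + ∫ s in (0 : ℝ)..t, ‖ℓ s‖ ^ 2) := by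
  have hℓc := HasDerivWithinAt.continuousOn hℓ
  have hM : 0 ≤ M := (abs_nonneg _).trans (hk'M 0 (left_mem_Icc.2 ht))
  have hk_le : ∀ s ∈ Icc 0 t, |k s| ≤ M * T := fun s hs => by
    have hsub : Icc 0 s ⊆ Icc 0 t := Icc_subset_Icc_right hs.2
    simpa only [hk0, sub_zero, Real.norm_eq_abs] using
      norm_sub_le_mul_of_deriv_eq_zero_of_ge hs.1 hT (fun r hr => (hk r (hsub hr)).mono hsub)
        (fun r hr => hk'M r (hsub hr)) fun r hr => hk'T r (hsub hr)
  have hboundary := abs_mul_inner_le_of_abs_le (hk_le t (right_mem_Icc.2 ht)) (h₁ - h t) (ℓ t)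
  have hgain := abs_integral_mul_inner_sub_le hT ht hk'M hk'T hh hℓc h₁
  have henergy := abs_integral_mul_inner_neg_self_le ht hk_le hℓc
  rw [integral_mul_inner_deriv_eq ht hk hk' (fun s hs => (hh s hs).const_sub h₁) hℓc.neg hℓ hℓ',
    hk0, zero_mul, sub_zero]
  set boundary := k t * ⟪h₁ - h t, ℓ t⟫
  set gain := ∫ s in (0 : ℝ)..t, k' s * ⟪h₁ - h s, ℓ s⟫
  set energy := ∫ s in (0 : ℝ)..t, k s * ⟪-ℓ s, ℓ s⟫
  set L := ∫ s in (0 : ℝ)..t, ‖ℓ s‖ ^ 2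
  set C := 1 + M * (1 + T + T ^ 2) with hC
  have hL : 0 ≤ L := intervalIntegral.integral_nonneg ht fun s _ => by positivity
  have hMT : 0 ≤ M * T := by positivity
  have hMT2 : 0 ≤ M * T ^ 2 := by positivity
  calc |boundary - gain - energy| ≤ |boundary| + |gain| + |energy| :=
        (abs_sub _ _).trans (add_le_add_left (abs_sub _ _) _)
    _ ≤ M * T * ‖h₁ - h 0‖ ^ 2 + 1 / 2 * (|k t| * ‖h₁ - h t‖ ^ 2) + M * T / 2 * ‖ℓ t‖ ^ 2
          + M * (1 / 2 + T + T ^ 2) * L := by linarith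
    _ ≤ C * ‖h₁ - h 0‖ ^ 2 + C * (|k t| * ‖h₁ - h t‖ ^ 2) + C * ‖ℓ t‖ ^ 2 + C * L := by
        gcongr <;> linarith only [hC, hMT, hMT2, hM]
    _ = C * (‖h₁ - h 0‖ ^ 2 + |k t| * ‖h₁ - h t‖ ^ 2 + ‖ℓ t‖ ^ 2 + L) := by ring

end Feedback

theorem hasDerivAt_const_add_integral {E : Type*} [NormedAddCommGroup E] [NormedSpace ℝ E]
    [CompleteSpace E] {f : ℝ → E} (hf : Continuous f) (c : E) (a s : ℝ) :
    HasDerivAt (fun t => c + ∫ r in a..t, f r) (f s) s :=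
  (hf.integral_hasStrictDerivAt a s).hasDerivAt.const_add c

/-- Bound on the feedback term in Lemma 3.3 (case k = 0): under the hypotheses (hypkp) on
`k_p`, there is a constant `C > 0` depending only on `k_d` and `T_I` such that for every
`C¹` velocity `ℓ`, with `h t = h₀ + ∫₀ᵗ ℓ`, for every `t ≥ 0`,
`|∫₀ᵗ k_p (h₁−h)·ℓ'| ≤ C(|h₁−h₀|² + k_p(t)|h₁−h(t)|² + |ℓ(t)|² + ∫₀ᵗ |ℓ|²)`. -/
theorem stmt16 (kd TI : ℝ) (hkd : 0 < kd) (hTI : 0 < TI) :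
    ∃ C > (0:ℝ), ∀ (h₀ h₁ : EuclideanSpace ℝ (Fin 3)) (kp kp' : ℝ → ℝ),
      (∀ s : ℝ, HasDerivAt kp (kp' s) s) → Continuous kp' → kp 0 = 0 →
      (∀ s : ℝ, 0 ≤ s → kp s ∈ Set.Icc (0:ℝ) 1) →
      (∀ s : ℝ, 0 ≤ s → 0 ≤ kp' s ∧ kp' s ≤ kd / (2 * TI ^ 2)) →
      (∀ s : ℝ, TI ≤ s → kp' s = 0) →
      ∀ (ℓ ℓ' : ℝ → EuclideanSpace ℝ (Fin 3)),
      (∀ s : ℝ, HasDerivAt ℓ (ℓ' s) s) → Continuous ℓ' →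
      ∀ h : ℝ → EuclideanSpace ℝ (Fin 3),
      (∀ t : ℝ, h t = h₀ + ∫ s in (0:ℝ)..t, ℓ s) →
      ∀ t : ℝ, 0 ≤ t →
        |∫ s in (0:ℝ)..t, kp s * ⟪h₁ - h s, ℓ' s⟫|
          ≤ C * (‖h₁ - h₀‖ ^ 2 + kp t * ‖h₁ - h t‖ ^ 2 + ‖ℓ t‖ ^ 2
              + ∫ s in (0:ℝ)..t, ‖ℓ s‖ ^ 2) := by
  refine ⟨1 + kd / (2 * TI ^ 2) * (1 + TI + TI ^ 2), by positivity,
    fun h₀ h₁ kp kp' hkp hkp'c hkp0 hkp01 hkp'M hkp'T ℓ ℓ' hℓ hℓ'c h hh t ht => ?_⟩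
  obtain rfl : h = fun t => h₀ + ∫ s in (0:ℝ)..t, ℓ s := funext hh
  have hℓc : Continuous ℓ := continuous_iff_continuousAt.2 fun s => (hℓ s).continuousAt
  simpa only [intervalIntegral.integral_same, add_zero, abs_of_nonneg (hkp01 t ht).1] using
    stmt16_general hTI.le ht (fun s _ => (hkp s).hasDerivWithinAt) hkp'c.continuousOn hkp0
      (fun s hs => (abs_of_nonneg (hkp'M s hs.1).1).trans_le (hkp'M s hs.1).2)
      (fun s _ => hkp'T s)
      (fun s _ => (hasDerivAt_const_add_integral hℓc h₀ 0 s).hasDerivWithinAt)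
      (fun s _ => (hℓ s).hasDerivWithinAt) hℓ'c.continuousOn h₁
end
end
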